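/- arXiv:1305.4698 — 3 statements merged into one kernel-verified Lean document; each statement's English description precedes it below -/
import Mathlib

section
/- Let $n \ge 3$ and $\tau > 0$ with $\tau \neq n-2$. Then there exists a constant $C = C(n,\tau) > 1$ such that for all $y \in \mathbb{R}^n$, $$\frac{1}{C(1+|y|)^{\min(\tau,n-2)}} \le \int_{\mathbb{R}^n} \frac{dz}{|y-z|^{n-2}(1+|z|)^{2+\tau}} \le \frac{C}{(1+|y|)^{\min(\tau,n-2)}}.$$ -/
open Real MeasureTheory

/-!
Put `d = n`, `a = n - 2`, `b = 2 + τ` and `R = 1 + ‖y‖`. Since `‖y - z‖ ≤ R + ‖z‖`, the integrand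
`‖y - z‖ ^ (-a) * (1 + ‖z‖) ^ (-b)` is at least `(R + ‖z‖) ^ (-a) * (1 + ‖z‖) ^ (-b)`. Conversely,
`1 + ‖z‖` is comparable to `R + ‖y - z‖` where `‖y - z‖ ≤ R / 2`, and `‖y - z‖` to `R + ‖z‖`
elsewhere, so that up to a constant the integrand is at most the sum of this radial weight and of
`‖y - z‖ ^ (-a) * (R + ‖y - z‖) ^ (-b)`. The latter is homogeneous in `(R, y - z)`, whence its
integral is a multiple of `R ^ (d - (a + b))`. The integral of the former is of order
`R ^ (d - (a + b))` if `b < d`, when replacing `1` by `0` keeps it finite and makes it homogeneous,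
and of order `R ^ (-a)` if `b > d`, when `(1 + ‖z‖) ^ (-b)` is already integrable.
-/

open Set Filter Asymptotics Module

lemma rpow_neg_le_mul_rpow_neg {a c x t : ℝ} (ha : 0 ≤ a) (hc : 0 < c) (hx : 0 < x)
    (h : x ≤ c * t) : t ^ (-a) ≤ c ^ a * x ^ (-a) := by
  have hxt : x / c ≤ t := (div_le_iff₀' hc).2 h
  calc t ^ (-a) ≤ (x / c) ^ (-a) := rpow_le_rpow_of_nonpos (by positivity) hxt (by linarith)
    _ = c ^ a * x ^ (-a) := by
      rw [div_rpow hx.le hc.le, rpow_neg hc.le, div_inv_eq_mul, mul_comm]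

lemma integrableOn_Ioi_rpow_mul_one_add_rpow {p b : ℝ} (hp : 0 < p) (hpb : p < b) :
    IntegrableOn (fun t : ℝ ↦ t ^ (p - 1) * (1 + t) ^ (-b)) (Ioi 0) := by
  have hcont : ContinuousOn (fun t : ℝ ↦ (1 + t) ^ (-b)) (Ioi 0) :=
    (continuousOn_const.add continuousOn_id).rpow_const fun t ht ↦
      Or.inl (add_pos one_pos ht).ne'
  refine mellin_convergent_of_isBigO_scalar (hcont.locallyIntegrableOn measurableSet_Ioi)
    (.of_norm_eventuallyLE ?_) hpb (b := 0) (.of_norm_eventuallyLE ?_) hp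
  · filter_upwards [eventually_gt_atTop 0] with t ht
    rw [Real.norm_of_nonneg (by positivity)]
    exact rpow_le_rpow_of_nonpos ht (by linarith) (by linarith)
  · filter_upwards [self_mem_nhdsWithin] with t (ht : 0 < t)
    rw [Real.norm_of_nonneg (by positivity), neg_zero, rpow_zero]
    exact rpow_le_one_of_one_le_of_nonpos (by linarith) (by linarith)

section RadialWeight

/-- The weight `z ↦ (r + ‖z‖) ^ (-a) * (s + ‖z‖) ^ (-b)`. Allowing the offsets `r` and `s` to vanish
covers the singular weights as well; for `r = 0 ≠ a` the value at `z = 0` is the junk value `0`. -/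
noncomputable def radialWeight {E : Type*} [Norm E] (a b r s : ℝ) (z : E) : ℝ :=
  (r + ‖z‖) ^ (-a) * (s + ‖z‖) ^ (-b)

variable {E : Type*} [NormedAddCommGroup E] {a b r s r' s' R : ℝ}

lemma radialWeight_comm (a b r s : ℝ) : (radialWeight a b r s : E → ℝ) = radialWeight b a s r :=
  funext fun _ ↦ mul_comm _ _

lemma radialWeight_nonneg (hr : 0 ≤ r) (hs : 0 ≤ s) (z : E) : 0 ≤ radialWeight a b r s z := by
  unfold radialWeight
  positivity

lemma radialWeight_anti (ha : 0 ≤ a) (hb : 0 ≤ b) (hr : 0 ≤ r) (hs : 0 ≤ s) (hrr' : r ≤ r')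
    (hss' : s ≤ s') {z : E} (hz : z ≠ 0) : radialWeight a b r' s' z ≤ radialWeight a b r s z := by
  have hrz : 0 < r + ‖z‖ := add_pos_of_nonneg_of_pos hr (norm_pos_iff.2 hz)
  have hsz : 0 < s + ‖z‖ := add_pos_of_nonneg_of_pos hs (norm_pos_iff.2 hz)
  exact mul_le_mul (rpow_le_rpow_of_nonpos hrz (by linarith) (by linarith))
    (rpow_le_rpow_of_nonpos hsz (by linarith) (by linarith))
    (rpow_nonneg (by linarith) _) (rpow_nonneg hrz.le _)

lemma rpow_neg_mul_radialWeight_one_le (ha : 0 ≤ a) (hs : 0 ≤ s) (hR : 1 ≤ R) (z : E) :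
    R ^ (-a) * radialWeight a b 1 s z ≤ radialWeight a b R s z := by
  have hsum : R + ‖z‖ ≤ R * (1 + ‖z‖) := by nlinarith [norm_nonneg z]
  unfold radialWeight
  rw [← mul_assoc, ← mul_rpow (by positivity) (by positivity)]
  gcongr ?_ * _
  exact rpow_le_rpow_of_nonpos (by positivity) hsum (by linarith)

lemma radialWeight_le_rpow_neg_mul (ha : 0 ≤ a) (hs : 0 ≤ s) (hR : 0 < R) (z : E) :
    radialWeight a b R s z ≤ R ^ (-a) * radialWeight 0 b 1 s z := by
  unfold radialWeight
  rw [neg_zero, rpow_zero, one_mul]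
  gcongr ?_ * _
  exact rpow_le_rpow_of_nonpos hR (le_add_of_nonneg_right (norm_nonneg z)) (by linarith)

variable [NormedSpace ℝ E]

lemma radialWeight_smul (hR : 0 ≤ R) (hr : 0 ≤ r) (hs : 0 ≤ s) (z : E) :
    radialWeight a b (R * r) (R * s) (R • z) = R ^ (-a) * R ^ (-b) * radialWeight a b r s z := by
  unfold radialWeight
  rw [norm_smul, Real.norm_of_nonneg hR, ← mul_add, ← mul_add, mul_rpow hR (by positivity),
    mul_rpow hR (by positivity)]
  ring

variable [FiniteDimensional ℝ E] [MeasurableSpace E] [BorelSpace E]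
  (μ : Measure E) [μ.IsAddHaarMeasure]

lemma integral_radialWeight_mul (hR : 0 < R) (hr : 0 ≤ r) (hs : 0 ≤ s) :
    ∫ z, radialWeight a b (R * r) (R * s) z ∂μ =
      R ^ ((finrank ℝ E : ℝ) - (a + b)) * ∫ z, radialWeight a b r s z ∂μ := by
  have h := Measure.integral_comp_smul_of_nonneg μ
    (radialWeight a b (R * r) (R * s) : E → ℝ) R (hR := hR.le)
  simp_rw [radialWeight_smul hR.le hr hs, ← rpow_add hR, ← neg_add] at h
  rw [integral_const_mul, smul_eq_mul, ← rpow_natCast] at h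
  rw [sub_eq_add_neg, rpow_add hR, mul_assoc, h, mul_inv_cancel_left₀ (by positivity)]

variable [Nontrivial E]

lemma integrable_radialWeight_zero_one (ha : a < finrank ℝ E)
    (hab : (finrank ℝ E : ℝ) < a + b) : Integrable (radialWeight a b 0 1 : E → ℝ) μ := by
  have hpolar : IntegrableOn (fun t : ℝ ↦ t ^ (finrank ℝ E - 1) • (t ^ (-a) * (1 + t) ^ (-b)))
      (Ioi 0) := by
    refine (integrableOn_Ioi_rpow_mul_one_add_rpow (sub_pos.2 ha) (by linarith)).congr_fun
      (fun t (ht : 0 < t) ↦ ?_) measurableSet_Ioi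
    simp only [smul_eq_mul]
    rw [← mul_assoc, ← rpow_natCast, ← rpow_add ht, Nat.cast_pred finrank_pos]
    ring_nf
  unfold radialWeight
  simpa only [zero_add] using
    (integrable_fun_norm_addHaar μ (f := fun t ↦ t ^ (-a) * (1 + t) ^ (-b))).2 hpolar

lemma integrable_radialWeight (ha₀ : 0 ≤ a) (ha : a < finrank ℝ E)
    (hab : (finrank ℝ E : ℝ) < a + b) (hr : 0 ≤ r) (hs : 0 < s) :
    Integrable (radialWeight a b r s : E → ℝ) μ := by
  have hzero : Integrable (radialWeight a b 0 s : E → ℝ) μ := by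
    rw [← integrable_comp_smul_iff μ _ hs.ne']
    refine ((integrable_radialWeight_zero_one μ ha hab).const_mul (s ^ (-a) * s ^ (-b))).congr
      (.of_forall fun z ↦ ?_)
    simpa only [mul_zero, mul_one] using (radialWeight_smul hs.le le_rfl zero_le_one z).symm
  refine hzero.mono' (by unfold radialWeight; fun_prop) ?_
  filter_upwards [Measure.ae_ne μ 0] with z hz
  rw [Real.norm_of_nonneg (radialWeight_nonneg hr hs.le z)]
  exact radialWeight_anti ha₀ (by linarith) le_rfl hs.le hr le_rfl hz

lemma integral_radialWeight_pos (ha₀ : 0 ≤ a) (ha : a < finrank ℝ E)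
    (hab : (finrank ℝ E : ℝ) < a + b) (hr : 0 < r) (hs : 0 < s) :
    0 < ∫ z, radialWeight a b r s z ∂μ := by
  have hpos (z : E) : 0 < radialWeight a b r s z := by
    unfold radialWeight
    positivity
  rw [integral_pos_iff_support_of_nonneg (fun z ↦ (hpos z).le)
    (integrable_radialWeight μ ha₀ ha hab hr.le hs),
    Function.support_eq_univ fun z ↦ (hpos z).ne']
  exact Measure.measure_univ_pos.2 (NeZero.ne μ)

lemma mul_rpow_le_integral_radialWeight_one (ha₀ : 0 ≤ a) (ha : a < finrank ℝ E)
    (hab : (finrank ℝ E : ℝ) < a + b) (hR : 1 ≤ R) :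
    (∫ z, radialWeight a b 1 1 z ∂μ) * R ^ (-min (a + b - finrank ℝ E) a) ≤
      ∫ z, radialWeight a b R 1 z ∂μ := by
  have hR₀ : 0 < R := by linarith
  have hint {r s : ℝ} (hr : 0 ≤ r) (hs : 0 < s) : Integrable (radialWeight a b r s : E → ℝ) μ :=
    integrable_radialWeight μ ha₀ ha hab hr hs
  rw [mul_comm]
  rcases min_choice (a + b - finrank ℝ E) a with h | h <;> rw [h]
  · rw [neg_sub, ← integral_radialWeight_mul μ hR₀ zero_le_one zero_le_one, mul_one]
    refine integral_mono_ae (hint hR₀.le hR₀) (hint hR₀.le one_pos)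
      ((Measure.ae_ne μ 0).mono fun z hz ↦ ?_)
    exact radialWeight_anti ha₀ (by linarith) hR₀.le zero_le_one le_rfl hR hz
  · rw [← integral_const_mul]
    exact integral_mono ((hint zero_le_one one_pos).const_mul _) (hint hR₀.le one_pos)
      (rpow_neg_mul_radialWeight_one_le ha₀ zero_le_one hR)

lemma exists_integral_radialWeight_one_le (ha₀ : 0 ≤ a) (ha : a < finrank ℝ E)
    (hab : (finrank ℝ E : ℝ) < a + b) (hb : b ≠ finrank ℝ E) :
    ∃ C, 0 ≤ C ∧ ∀ R, 1 ≤ R →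
      ∫ z, radialWeight a b R 1 z ∂μ ≤ C * R ^ (-min (a + b - finrank ℝ E) a) := by
  have hint {R : ℝ} (hR : 1 ≤ R) : Integrable (radialWeight a b R 1 : E → ℝ) μ :=
    integrable_radialWeight μ ha₀ ha hab (by linarith) one_pos
  rcases hb.lt_or_gt with h | h
  · refine ⟨∫ z : E, radialWeight a b 1 0 z ∂μ,
      integral_nonneg (radialWeight_nonneg zero_le_one le_rfl), fun R hR ↦ ?_⟩
    have hR₀ : 0 < R := by linarith
    have hint₀ : Integrable (radialWeight a b R 0 : E → ℝ) μ := by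
      rw [radialWeight_comm]
      exact integrable_radialWeight μ (by linarith) h (by linarith) le_rfl hR₀
    calc ∫ z, radialWeight a b R 1 z ∂μ
        ≤ ∫ z, radialWeight a b R 0 z ∂μ :=
          integral_mono_ae (hint hR) hint₀ ((Measure.ae_ne μ 0).mono fun z hz ↦
            radialWeight_anti ha₀ (by linarith) hR₀.le le_rfl le_rfl zero_le_one hz)
      _ = R ^ ((finrank ℝ E : ℝ) - (a + b)) * ∫ z, radialWeight a b 1 0 z ∂μ := by
          simpa only [mul_one, mul_zero] using
            integral_radialWeight_mul (a := a) (b := b) μ hR₀ zero_le_one le_rfl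
      _ = (∫ z, radialWeight a b 1 0 z ∂μ) * R ^ (-min (a + b - finrank ℝ E) a) := by
          rw [min_eq_left (by linarith), neg_sub, mul_comm]
  · refine ⟨∫ z : E, radialWeight 0 b 1 1 z ∂μ,
      integral_nonneg (radialWeight_nonneg zero_le_one zero_le_one), fun R hR ↦ ?_⟩
    rw [min_eq_right (by linarith), mul_comm, ← integral_const_mul]
    exact integral_mono (hint hR)
      ((integrable_radialWeight μ le_rfl (by linarith) (by linarith) zero_le_one
        one_pos).const_mul _)
      (radialWeight_le_rpow_neg_mul ha₀ zero_le_one (by linarith))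

end RadialWeight

section RieszPotential

/-- The integrand, at `z`, of the Riesz potential at `y` of the density `(1 + ‖·‖) ^ (-b)`, with
kernel `‖·‖ ^ (-a)`. The Newtonian potential is the case where `a` is the dimension minus `2`. -/
noncomputable def rieszIntegrand {E : Type*} [NormedAddCommGroup E] (a b : ℝ) (y z : E) : ℝ :=
  ‖y - z‖ ^ (-a) * (1 + ‖z‖) ^ (-b)

variable {E : Type*} [NormedAddCommGroup E] {a b : ℝ}

lemma one_div_eq_rieszIntegrand (a b : ℝ) (y z : E) :
    1 / (‖y - z‖ ^ a * (1 + ‖z‖) ^ b) = rieszIntegrand a b y z := by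
  rw [rieszIntegrand, rpow_neg (norm_nonneg _), rpow_neg (by positivity), one_div, mul_inv]

lemma rieszIntegrand_nonneg (a b : ℝ) (y z : E) : 0 ≤ rieszIntegrand a b y z := by
  unfold rieszIntegrand
  positivity

lemma radialWeight_le_rieszIntegrand (ha : 0 ≤ a) {y z : E} (hz : z ≠ y) :
    radialWeight a b (1 + ‖y‖) 1 z ≤ rieszIntegrand a b y z := by
  have hpos : 0 < ‖y - z‖ := norm_sub_pos_iff.2 hz.symm
  have hle : ‖y - z‖ ≤ 1 + ‖y‖ + ‖z‖ := by linarith [norm_sub_le y z]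
  unfold radialWeight rieszIntegrand
  gcongr ?_ * _
  exact rpow_le_rpow_of_nonpos hpos hle (by linarith)

lemma rieszIntegrand_le_of_near (a : ℝ) (hb : 0 ≤ b) {y z : E} (h : ‖y - z‖ ≤ (1 + ‖y‖) / 2) :
    rieszIntegrand a b y z ≤ 3 ^ b * radialWeight a b 0 (1 + ‖y‖) (y - z) := by
  have hle : 1 + ‖y‖ + ‖y - z‖ ≤ 3 * (1 + ‖z‖) := by linarith [norm_sub_norm_le y z]
  unfold rieszIntegrand radialWeight
  rw [zero_add, mul_left_comm]
  gcongr
  exact rpow_neg_le_mul_rpow_neg hb three_pos (by positivity) hle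

lemma rieszIntegrand_le_of_far (ha : 0 ≤ a) (b : ℝ) {y z : E} (h : (1 + ‖y‖) / 2 ≤ ‖y - z‖) :
    rieszIntegrand a b y z ≤ 5 ^ a * radialWeight a b (1 + ‖y‖) 1 z := by
  have hle : 1 + ‖y‖ + ‖z‖ ≤ 5 * ‖y - z‖ := by
    linarith [norm_sub_norm_le z y, norm_sub_rev y z]
  unfold rieszIntegrand radialWeight
  rw [← mul_assoc]
  gcongr
  exact rpow_neg_le_mul_rpow_neg ha (by norm_num) (by positivity) hle

lemma rieszIntegrand_le (ha : 0 ≤ a) (hb : 0 ≤ b) (y z : E) :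
    rieszIntegrand a b y z ≤ 3 ^ b * radialWeight a b 0 (1 + ‖y‖) (y - z) +
      5 ^ a * radialWeight a b (1 + ‖y‖) 1 z := by
  have hnear : 0 ≤ 3 ^ b * radialWeight a b 0 (1 + ‖y‖) (y - z) :=
    mul_nonneg (by positivity) (radialWeight_nonneg le_rfl (by positivity) _)
  have hfar : 0 ≤ 5 ^ a * radialWeight a b (1 + ‖y‖) 1 z :=
    mul_nonneg (by positivity) (radialWeight_nonneg (by positivity) zero_le_one _)
  rcases le_total ‖y - z‖ ((1 + ‖y‖) / 2) with h | h
  · exact le_add_of_le_of_nonneg (rieszIntegrand_le_of_near a hb h) hfar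
  · exact le_add_of_nonneg_of_le hnear (rieszIntegrand_le_of_far ha b h)

variable [NormedSpace ℝ E] [FiniteDimensional ℝ E] [MeasurableSpace E] [BorelSpace E]
  [Nontrivial E] (μ : Measure E) [μ.IsAddHaarMeasure]

lemma integrable_rieszIntegrand (ha₀ : 0 ≤ a) (ha : a < finrank ℝ E)
    (hab : (finrank ℝ E : ℝ) < a + b) (y : E) : Integrable (rieszIntegrand a b y) μ := by
  have hnear := (integrable_radialWeight μ ha₀ ha hab le_rfl
    (show 0 < 1 + ‖y‖ by positivity)).comp_sub_left y
  have hfar := integrable_radialWeight μ ha₀ ha hab (show 0 ≤ 1 + ‖y‖ by positivity) one_pos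
  refine ((hnear.const_mul (3 ^ b)).add (hfar.const_mul (5 ^ a))).mono'
    (by unfold rieszIntegrand; fun_prop) (.of_forall fun z ↦ ?_)
  rw [Real.norm_of_nonneg (rieszIntegrand_nonneg a b y z)]
  exact rieszIntegrand_le ha₀ (by linarith) y z

lemma integral_rieszIntegrand_le (ha₀ : 0 ≤ a) (ha : a < finrank ℝ E)
    (hab : (finrank ℝ E : ℝ) < a + b) (y : E) :
    ∫ z, rieszIntegrand a b y z ∂μ ≤
      3 ^ b * ((1 + ‖y‖) ^ ((finrank ℝ E : ℝ) - (a + b)) * ∫ z, radialWeight a b 0 1 z ∂μ) +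
        5 ^ a * ∫ z, radialWeight a b (1 + ‖y‖) 1 z ∂μ := by
  have hR : 0 < 1 + ‖y‖ := by positivity
  have hnear := ((integrable_radialWeight μ ha₀ ha hab le_rfl hR).comp_sub_left y).const_mul
    (3 ^ b)
  have hfar := (integrable_radialWeight μ ha₀ ha hab hR.le one_pos).const_mul (5 ^ a)
  rw [← integral_radialWeight_mul μ hR le_rfl zero_le_one, mul_zero, mul_one]
  calc ∫ z, rieszIntegrand a b y z ∂μ
      ≤ ∫ z, (3 ^ b * radialWeight a b 0 (1 + ‖y‖) (y - z) +
          5 ^ a * radialWeight a b (1 + ‖y‖) 1 z) ∂μ :=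
        integral_mono (integrable_rieszIntegrand μ ha₀ ha hab y) (hnear.add hfar)
          (rieszIntegrand_le ha₀ (by linarith) y)
    _ = 3 ^ b * ∫ z, radialWeight a b 0 (1 + ‖y‖) z ∂μ +
          5 ^ a * ∫ z, radialWeight a b (1 + ‖y‖) 1 z ∂μ := by
        rw [integral_add hnear hfar, integral_const_mul, integral_const_mul,
          integral_sub_left_eq_self (radialWeight a b 0 (1 + ‖y‖)) μ y]

lemma exists_integral_rieszIntegrand_le (ha₀ : 0 ≤ a) (ha : a < finrank ℝ E)
    (hab : (finrank ℝ E : ℝ) < a + b) (hb : b ≠ finrank ℝ E) :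
    ∃ C, 0 ≤ C ∧ ∀ y : E, ∫ z, rieszIntegrand a b y z ∂μ ≤
      C * (1 + ‖y‖) ^ (-min (a + b - finrank ℝ E) a) := by
  obtain ⟨C, hC₀, hC⟩ := exists_integral_radialWeight_one_le μ ha₀ ha hab hb
  set K := ∫ z : E, radialWeight a b 0 1 z ∂μ
  have hK : 0 ≤ K := integral_nonneg (radialWeight_nonneg le_rfl zero_le_one)
  refine ⟨3 ^ b * K + 5 ^ a * C, by positivity, fun y ↦ ?_⟩
  have hR : 1 ≤ 1 + ‖y‖ := le_add_of_nonneg_right (norm_nonneg y)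
  have hexp : (finrank ℝ E : ℝ) - (a + b) ≤ -min (a + b - finrank ℝ E) a := by
    linarith [min_le_left (a + b - finrank ℝ E) a]
  calc ∫ z, rieszIntegrand a b y z ∂μ
      ≤ 3 ^ b * ((1 + ‖y‖) ^ ((finrank ℝ E : ℝ) - (a + b)) * K) +
          5 ^ a * ∫ z, radialWeight a b (1 + ‖y‖) 1 z ∂μ :=
        integral_rieszIntegrand_le μ ha₀ ha hab y
    _ ≤ 3 ^ b * ((1 + ‖y‖) ^ (-min (a + b - finrank ℝ E) a) * K) +
          5 ^ a * (C * (1 + ‖y‖) ^ (-min (a + b - finrank ℝ E) a)) := by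
        gcongr
        exact hC _ hR
    _ = (3 ^ b * K + 5 ^ a * C) * (1 + ‖y‖) ^ (-min (a + b - finrank ℝ E) a) := by ring

lemma exists_le_integral_rieszIntegrand (ha₀ : 0 ≤ a) (ha : a < finrank ℝ E)
    (hab : (finrank ℝ E : ℝ) < a + b) :
    ∃ c, 0 < c ∧ ∀ y : E, c * (1 + ‖y‖) ^ (-min (a + b - finrank ℝ E) a) ≤
      ∫ z, rieszIntegrand a b y z ∂μ := by
  refine ⟨∫ z, radialWeight a b 1 1 z ∂μ,
    integral_radialWeight_pos μ ha₀ ha hab one_pos one_pos, fun y ↦ ?_⟩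
  have hR : 1 ≤ 1 + ‖y‖ := le_add_of_nonneg_right (norm_nonneg y)
  exact (mul_rpow_le_integral_radialWeight_one μ ha₀ ha hab hR).trans <|
    integral_mono_ae (integrable_radialWeight μ ha₀ ha hab (by positivity) one_pos)
      (integrable_rieszIntegrand μ ha₀ ha hab y)
      ((Measure.ae_ne μ y).mono fun _ ↦ radialWeight_le_rieszIntegrand ha₀)

end RieszPotential

theorem stmt_1_general {E : Type*} [NormedAddCommGroup E] [NormedSpace ℝ E]
    [FiniteDimensional ℝ E] [MeasurableSpace E] [BorelSpace E] (μ : Measure E)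
    [μ.IsAddHaarMeasure] {a b : ℝ} (ha₀ : 0 ≤ a) (ha : a < finrank ℝ E)
    (hab : (finrank ℝ E : ℝ) < a + b) (hb : b ≠ finrank ℝ E) :
    ∃ C : ℝ, 1 < C ∧ ∀ y : E,
      1 / (C * (1 + ‖y‖) ^ min (a + b - finrank ℝ E) a) ≤
        ∫ z, 1 / (‖y - z‖ ^ a * (1 + ‖z‖) ^ b) ∂μ ∧
      ∫ z, 1 / (‖y - z‖ ^ a * (1 + ‖z‖) ^ b) ∂μ ≤
        C / (1 + ‖y‖) ^ min (a + b - finrank ℝ E) a := by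
  have : Nontrivial E := nontrivial_of_finrank_pos (R := ℝ) (by exact_mod_cast ha₀.trans_lt ha)
  obtain ⟨c, hc₀, hc⟩ := exists_le_integral_rieszIntegrand μ ha₀ ha hab
  obtain ⟨C, hC₀, hC⟩ := exists_integral_rieszIntegrand_le μ ha₀ ha hab hb
  have hc' : 0 < c⁻¹ := inv_pos.2 hc₀
  simp only [one_div_eq_rieszIntegrand]
  refine ⟨1 + C + c⁻¹, by linarith, fun y ↦ ?_⟩
  have hR : 0 ≤ 1 + ‖y‖ := by positivity
  rw [one_div, mul_inv, div_eq_mul_inv, ← rpow_neg hR]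
  constructor
  · refine le_trans ?_ (hc y)
    gcongr
    exact inv_le_of_inv_le₀ hc₀ (by linarith)
  · refine (hC y).trans ?_
    gcongr
    linarith

theorem stmt_1 {n : ℕ} (hn : 3 ≤ n) (τ : ℝ) (hτ : 0 < τ) (hne : τ ≠ (n : ℝ) - 2) :
    ∃ C : ℝ, 1 < C ∧ ∀ y : EuclideanSpace ℝ (Fin n),
      1 / (C * (1 + ‖y‖) ^ min τ ((n : ℝ) - 2)) ≤
        (∫ z : EuclideanSpace ℝ (Fin n),
          1 / (‖y - z‖ ^ ((n : ℝ) - 2) * (1 + ‖z‖) ^ (2 + τ))) ∧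
      (∫ z : EuclideanSpace ℝ (Fin n),
          1 / (‖y - z‖ ^ ((n : ℝ) - 2) * (1 + ‖z‖) ^ (2 + τ))) ≤
        C / (1 + ‖y‖) ^ min τ ((n : ℝ) - 2) := by
  have hn' : (3 : ℝ) ≤ n := by exact_mod_cast hn
  have hexp : (n : ℝ) - 2 + (2 + τ) - n = τ := by ring
  have h := stmt_1_general (volume : Measure (EuclideanSpace ℝ (Fin n)))
    (a := n - 2) (b := 2 + τ)
  simp only [finrank_euclideanSpace_fin, hexp] at h
  exact h (by linarith) (by linarith) (by linarith) fun hb ↦ hne (by linarith)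
end

section
/- Let $n \ge 3$, $0<\alpha<1$, and let $f \in C^{\alpha}_{loc}(\mathbb{R}^n)$ be nonnegative outside some compact set. Suppose $u \in C^2(\mathbb{R}^n)$ satisfies $-\Delta u = f$ in $\mathbb{R}^n$ and $\liminf_{|x|\to\infty} u(x) > -\infty$. Then there exists a constant $a \ge \min(0, \liminf_{|x|\to\infty} u(x))$ such that for every $x \in \mathbb{R}^n$, $$u(x) = \frac{1}{n(n-2)\omega_n}\int_{\mathbb{R}^n}\frac{f(\tilde{x})\,d\tilde{x}}{|x-\tilde{x}|^{n-2}} + a,$$ where $\omega_n$ is the volume of the unit ball in $\mathbb{R}^n$. -/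
open Real MeasureTheory Filter

/-- The Laplacian of a function on Euclidean space, as the sum of the second
partial derivatives along the coordinate directions. -/
noncomputable def lap {n : ℕ} (u : EuclideanSpace ℝ (Fin n) → ℝ)
    (x : EuclideanSpace ℝ (Fin n)) : ℝ :=
  ∑ i : Fin n,
    fderiv ℝ (fun y => fderiv ℝ u y (EuclideanSpace.single i 1)) x (EuclideanSpace.single i 1)

/-!
Inside the ball of radius `r`, replace the Newton kernel `Γ` by a second order Taylor polynomial in
`‖y‖ ^ 2`. The result is of class `C²`, and its Laplacian is minus the Epanechnikov density of
radius `r`. Hence `u x` is the Epanechnikov mean of `u` around `x` plus the integral of `f` against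
a kernel which is supported in the ball, lies between `0` and `Γ`, and tends to `Γ` as `r → ∞`.

Since `u` is bounded below, so are its means, and Fatou's lemma makes `Γ (x - ·) * f` integrable.
The means therefore converge to `u x` minus the Newtonian potential of `f`. As in the proof of
Liouville's theorem for functions bounded below, this limit does not depend on `x`, because
densities of radii `r` and `r + ‖x - z‖` around `x` and `z` are comparable up to a factor that tends
to `1`. It is at least `liminf u`, because means over large balls forget what happens on compact
sets.
-/

open Set Metric Module Topology InnerProductSpace Laplacian

section TaylorRpow

lemma hasDerivAt_ite_le {F : Type*} [NormedAddCommGroup F] [NormedSpace ℝ F] {f g f' g' : ℝ → F}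
    {T : ℝ} (hf : ∀ s ≤ T, HasDerivAt f (f' s) s) (hg : ∀ s, T ≤ s → HasDerivAt g (g' s) s)
    (h : f T = g T) (h' : f' T = g' T) (s : ℝ) :
    HasDerivAt (fun s => if s ≤ T then f s else g s) (if s ≤ T then f' s else g' s) s := by
  rcases lt_trichotomy s T with hs | rfl | hs
  · rw [if_pos hs.le]
    refine (hf s hs.le).congr_of_eventuallyEq ?_
    filter_upwards [Iio_mem_nhds hs] with x hx using if_pos (le_of_lt hx)
  · rw [if_pos le_rfl]
    have hleft : HasDerivWithinAt (fun r => if r ≤ s then f r else g r) (f' s) (Iic s) s :=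
      (hf s le_rfl).hasDerivWithinAt.congr (fun x hx => if_pos hx) (if_pos le_rfl)
    have hright : HasDerivWithinAt (fun r => if r ≤ s then f r else g r) (f' s) (Ici s) s := by
      rw [h']
      refine (hg s le_rfl).hasDerivWithinAt.congr (fun x hx => ?_) (by simp [h])
      rcases eq_or_lt_of_le (mem_Ici.1 hx) with rfl | hx
      · simp [h]
      · exact if_neg (not_le.2 hx)
    simpa [Iic_union_Ici] using hleft.union hright
  · rw [if_neg (not_le.2 hs)]
    refine (hg s hs.le).congr_of_eventuallyEq ?_
    filter_upwards [Ioi_mem_nhds hs] with x hx using if_neg (not_le.2 hx)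

/-- The power `s ↦ s ^ p`, replaced on `s ≤ T` by its second order Taylor polynomial at `T`.
It removes the singularity of `s ^ p` at `0` while staying of class `C²`. -/
noncomputable def taylorRpow (p T s : ℝ) : ℝ :=
  if s ≤ T then T ^ p * (1 + p * (s / T - 1) + p * (p - 1) / 2 * (s / T - 1) ^ 2) else s ^ p

/-- The derivative of `taylorRpow p T`. -/
noncomputable def taylorRpowDeriv (p T s : ℝ) : ℝ :=
  if s ≤ T then p * T ^ (p - 1) * (1 + (p - 1) * (s / T - 1)) else p * s ^ (p - 1)

variable {p T s : ℝ}

lemma hasDerivAt_taylorRpow (hT : 0 < T) (s : ℝ) :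
    HasDerivAt (taylorRpow p T) (taylorRpowDeriv p T s) s := by
  refine hasDerivAt_ite_le
    (f := fun s => T ^ p * (1 + p * (s / T - 1) + p * (p - 1) / 2 * (s / T - 1) ^ 2))
    (g := fun s => s ^ p) (f' := fun s => p * T ^ (p - 1) * (1 + (p - 1) * (s / T - 1)))
    (g' := fun s => p * s ^ (p - 1)) (fun s _ => ?_) (fun s hs => ?_) ?_ ?_ s
  · have hlin : HasDerivAt (fun s => s / T - 1) (1 / T) s :=
      ((hasDerivAt_id s).div_const T).sub_const 1
    refine ((((hlin.const_mul p).const_add 1).add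
      ((hlin.pow 2).const_mul (p * (p - 1) / 2))).const_mul (T ^ p)).congr_deriv ?_
    rw [rpow_sub_one hT.ne']
    norm_num
    field_simp
  · exact Real.hasDerivAt_rpow_const (Or.inl (hT.trans_le hs).ne')
  · simp [hT.ne']
  · simp [hT.ne']

lemma hasDerivAt_taylorRpowDeriv (hT : 0 < T) (s : ℝ) :
    HasDerivAt (taylorRpowDeriv p T) (p * (p - 1) * max s T ^ (p - 2)) s := by
  have hglue := hasDerivAt_ite_le (T := T)
    (f := fun s => p * T ^ (p - 1) * (1 + (p - 1) * (s / T - 1)))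
    (g := fun s => p * s ^ (p - 1)) (f' := fun _ => p * (p - 1) * T ^ (p - 2))
    (g' := fun s => p * (p - 1) * s ^ (p - 2)) (fun s _ => ?_) (fun s hs => ?_) ?_ rfl s
  · refine hglue.congr_deriv ?_
    split_ifs with h
    · rw [max_eq_right h]
    · rw [max_eq_left (not_le.1 h).le]
  · have hlin : HasDerivAt (fun s => s / T - 1) (1 / T) s :=
      ((hasDerivAt_id s).div_const T).sub_const 1
    refine (((hlin.const_mul (p - 1)).const_add 1).const_mul (p * T ^ (p - 1))).congr_deriv ?_
    rw [show p - 2 = p - 1 - 1 by ring, rpow_sub_one hT.ne' (p - 1)]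
    ring
  · refine ((Real.hasDerivAt_rpow_const (p := p - 1)
      (Or.inl (hT.trans_le hs).ne')).const_mul p).congr_deriv ?_
    rw [show p - 1 - 1 = p - 2 by ring, mul_assoc]
  · simp [hT.ne']

lemma contDiff_taylorRpow (hT : 0 < T) : ContDiff ℝ 2 (taylorRpow p T) := by
  have hderiv : deriv (taylorRpow p T) = taylorRpowDeriv p T :=
    funext fun s => (hasDerivAt_taylorRpow hT s).deriv
  have hderiv2 : deriv (taylorRpowDeriv p T) = fun s => p * (p - 1) * max s T ^ (p - 2) :=
    funext fun s => (hasDerivAt_taylorRpowDeriv hT s).deriv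
  rw [show (2 : WithTop ℕ∞) = 1 + 1 by norm_num, contDiff_succ_iff_deriv, hderiv,
    contDiff_one_iff_deriv, hderiv2]
  refine ⟨fun s => (hasDerivAt_taylorRpow hT s).differentiableAt, by simp,
    fun s => (hasDerivAt_taylorRpowDeriv hT s).differentiableAt, ?_⟩
  exact continuous_const.mul ((continuous_id.max continuous_const).rpow_const
    fun s => Or.inl (lt_max_of_lt_right hT).ne')

-- With `s = ‖y‖ ^ 2` the left-hand side is the Laplacian in dimension `2 - 2 * p`, the one in
-- which `‖y‖ ^ (2 * p)` is harmonic.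
lemma taylorRpow_radial_laplacian (hT : 0 < T) (s : ℝ) :
    4 * s * (p * (p - 1) * max s T ^ (p - 2)) + 2 * (2 - 2 * p) * taylorRpowDeriv p T s =
      -(4 * p * (p - 1) * (2 - p) * T ^ (p - 1) * max (1 - s / T) 0) := by
  unfold taylorRpowDeriv
  rw [show p - 2 = p - 1 - 1 by ring]
  split_ifs with h
  · rw [max_eq_right h, max_eq_left (sub_nonneg.2 ((div_le_one hT).2 h)),
      rpow_sub_one hT.ne' (p - 1)]
    field_simp
    ring
  · have hs : T < s := not_le.1 h
    rw [max_eq_left hs.le, max_eq_right (sub_nonpos.2 ((one_le_div hT).2 hs.le)),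
      rpow_sub_one (hT.trans hs).ne' (p - 1)]
    field_simp [(hT.trans hs).ne']
    ring

lemma taylorRpow_of_le (hT : 0 < T) (h : T ≤ s) : taylorRpow p T s = s ^ p := by
  rcases h.eq_or_lt with rfl | h
  · simp [taylorRpow, hT.ne']
  · exact if_neg (not_le.2 h)

lemma taylorRpow_nonneg (hp : p ≤ 0) (hT : 0 < T) (hs : 0 ≤ s) : 0 ≤ taylorRpow p T s := by
  unfold taylorRpow
  split_ifs with h
  · have hlin : 0 ≤ p * (s / T - 1) :=
      mul_nonneg_of_nonpos_of_nonpos hp (sub_nonpos.2 ((div_le_one hT).2 h))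
    have hcoeff : 0 ≤ p * (p - 1) := mul_nonneg_of_nonpos_of_nonpos hp (by linarith)
    positivity
  · positivity

lemma quadratic_le_one_sub_rpow {t : ℝ} (hp : p ≤ 0) (ht₀ : 0 ≤ t) (ht₁ : t < 1) :
    1 - p * t + p * (p - 1) / 2 * t ^ 2 ≤ (1 - t) ^ p := by
  have hlog : t + t ^ 2 / 2 ≤ -log (1 - t) := by
    have := sum_le_hasSum (Finset.range 2) (fun i _ => by positivity)
      (hasSum_pow_div_log_of_abs_lt_one (abs_lt.2 ⟨by linarith, ht₁⟩))
    norm_num [Finset.sum_range_succ] at this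
    exact this
  have hq : 0 ≤ -p * (t + t ^ 2 / 2) := mul_nonneg (by linarith) (by positivity)
  calc 1 - p * t + p * (p - 1) / 2 * t ^ 2
      ≤ 1 + -p * (t + t ^ 2 / 2) + (-p * (t + t ^ 2 / 2)) ^ 2 / 2 := by
        have : 0 ≤ p ^ 2 * (t ^ 3 + t ^ 4 / 4) := by positivity
        linarith
    _ ≤ exp (-p * (t + t ^ 2 / 2)) := quadratic_le_exp_of_nonneg hq
    _ ≤ exp (log (1 - t) * p) := exp_le_exp.2 (by nlinarith)
    _ = (1 - t) ^ p := (rpow_def_of_pos (by linarith) p).symm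

lemma taylorRpow_le_rpow (hp : p ≤ 0) (hT : 0 < T) (hs : 0 < s) : taylorRpow p T s ≤ s ^ p := by
  rcases le_or_gt T s with h | h
  · exact (taylorRpow_of_le hT h).le
  have hpos : 0 < s / T := by positivity
  calc taylorRpow p T s
      = T ^ p * (1 - p * (1 - s / T) + p * (p - 1) / 2 * (1 - s / T) ^ 2) := by
        rw [taylorRpow, if_pos h.le]; ring
    _ ≤ T ^ p * (1 - (1 - s / T)) ^ p := by
        gcongr
        exact quadratic_le_one_sub_rpow hp (sub_nonneg.2 ((div_le_one hT).2 h.le)) (by linarith)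
    _ = s ^ p := by rw [sub_sub_cancel, ← mul_rpow hT.le hpos.le, mul_div_cancel₀ _ hT.ne']

lemma tendsto_taylorRpow_atTop (hp : p < 0) (s : ℝ) :
    Tendsto (fun T => taylorRpow p T s) atTop (𝓝 0) := by
  have hpow : Tendsto (fun T : ℝ => T ^ p) atTop (𝓝 0) := by
    simpa using tendsto_rpow_neg_atTop (neg_pos.2 hp)
  have hlin : Tendsto (fun T => s / T - 1) atTop (𝓝 (0 - 1)) :=
    (tendsto_const_nhds.div_atTop tendsto_id).sub_const 1
  have hprod := hpow.mul (((hlin.const_mul p).const_add 1).add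
    ((hlin.pow 2).const_mul (p * (p - 1) / 2)))
  rw [zero_mul] at hprod
  refine hprod.congr' ?_
  filter_upwards [eventually_ge_atTop s] with T hT using (if_pos hT).symm

end TaylorRpow

section FDeriv

variable {E : Type*} [NormedAddCommGroup E] [NormedSpace ℝ E] {u φ : E → ℝ}

lemma iteratedFDeriv_two_self (hu : ContDiff ℝ 2 u) (x v : E) :
    iteratedFDeriv ℝ 2 u x ![v, v] = fderiv ℝ (fun y => fderiv ℝ u y v) x v := by
  have hdiff : DifferentiableAt ℝ (fderiv ℝ u) x :=
    (hu.fderiv_right (m := 1) le_rfl).differentiable one_ne_zero x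
  rw [iteratedFDeriv_two_apply, fderiv_clm_apply hdiff (differentiableAt_const v)]
  simp

variable [FiniteDimensional ℝ E] [MeasurableSpace E] [BorelSpace E] {μ : Measure E}
  [μ.IsAddHaarMeasure]

lemma integral_mul_fderiv_eq_neg_fderiv_mul_of_hasCompactSupport (hu : ContDiff ℝ 1 u)
    (hφ : ContDiff ℝ 1 φ) (hc : HasCompactSupport φ) (v : E) :
    ∫ x, u x * fderiv ℝ φ x v ∂μ = -∫ x, fderiv ℝ u x v * φ x ∂μ := by
  have hu' : Continuous fun x => fderiv ℝ u x v :=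
    (hu.continuous_fderiv one_ne_zero).clm_apply continuous_const
  have hφ' : Continuous fun x => fderiv ℝ φ x v :=
    (hφ.continuous_fderiv one_ne_zero).clm_apply continuous_const
  exact integral_mul_fderiv_eq_neg_fderiv_mul_of_integrable
    ((hu'.mul hφ.continuous).integrable_of_hasCompactSupport hc.mul_left)
    ((hu.continuous.mul hφ').integrable_of_hasCompactSupport (hc.fderiv_apply ℝ v).mul_left)
    ((hu.continuous.mul hφ.continuous).integrable_of_hasCompactSupport hc.mul_left)
    (fun x _ => hu.differentiable one_ne_zero x) (fun x _ => hφ.differentiable one_ne_zero x)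

end FDeriv

section Laplacian

variable {E : Type*} [NormedAddCommGroup E] [InnerProductSpace ℝ E]

lemma hasFDerivAt_comp_norm_sub_sq {ψ : ℝ → ℝ} {ψ' : ℝ} {x t : E}
    (hψ : HasDerivAt ψ ψ' (‖x - t‖ ^ 2)) :
    HasFDerivAt (fun t => ψ (‖x - t‖ ^ 2)) (ψ' • (-2 : ℝ) • innerSL ℝ (x - t)) t := by
  have hsq : HasFDerivAt (fun t => ‖x - t‖ ^ 2) ((-2 : ℝ) • innerSL ℝ (x - t)) t := by
    refine ((hasFDerivAt_id t).const_sub x).norm_sq.congr_fderiv ?_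
    ext w
    simp only [id_eq, map_sub, ContinuousLinearMap.comp_neg, ContinuousLinearMap.comp_id, neg_sub,
      smul_apply, sub_apply, coe_innerSL_apply, nsmul_eq_mul, Nat.cast_ofNat, neg_smul, neg_apply,
      smul_eq_mul]
    ring
  exact hψ.comp_hasFDerivAt t hsq

variable [FiniteDimensional ℝ E]

lemma laplacian_eq_sum_fderiv {ι : Type*} [Fintype ι] {u : E → ℝ} (hu : ContDiff ℝ 2 u)
    (b : OrthonormalBasis ι ℝ E) (x : E) :
    Δ u x = ∑ i, fderiv ℝ (fun y => fderiv ℝ u y (b i)) x (b i) := by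
  simp only [laplacian_eq_iteratedFDeriv_orthonormalBasis u b, iteratedFDeriv_two_self hu]

lemma lap_eq_laplacian {n : ℕ} {u : EuclideanSpace ℝ (Fin n) → ℝ} (hu : ContDiff ℝ 2 u)
    (x : EuclideanSpace ℝ (Fin n)) : lap u x = Δ u x := by
  simp only [lap, laplacian_eq_sum_fderiv hu (EuclideanSpace.basisFun (Fin n) ℝ),
    EuclideanSpace.basisFun_apply]

lemma continuous_laplacian {u : E → ℝ} (hu : ContDiff ℝ 2 u) : Continuous (Δ u) := by
  rw [laplacian_eq_iteratedFDeriv_stdOrthonormalBasis]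
  exact continuous_finsetSum _ fun i _ =>
    (continuous_eval_const _).comp (hu.continuous_iteratedFDeriv le_rfl)

lemma laplacian_comp_norm_sub_sq {ψ ψ' ψ'' : ℝ → ℝ} (hψ : ContDiff ℝ 2 ψ)
    (hψ' : ∀ s, HasDerivAt ψ (ψ' s) s) (hψ'' : ∀ s, HasDerivAt ψ' (ψ'' s) s) (x t : E) :
    Δ (fun t => ψ (‖x - t‖ ^ 2)) t =
      4 * ‖x - t‖ ^ 2 * ψ'' (‖x - t‖ ^ 2) + 2 * finrank ℝ E * ψ' (‖x - t‖ ^ 2) := by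
  have hsnd {v : E} (hv : ‖v‖ = 1) :
      fderiv ℝ (fun t => fderiv ℝ (fun t => ψ (‖x - t‖ ^ 2)) t v) t v =
        4 * ψ'' (‖x - t‖ ^ 2) * inner ℝ (x - t) v ^ 2 + 2 * ψ' (‖x - t‖ ^ 2) := by
    have hfst : (fun t => fderiv ℝ (fun t => ψ (‖x - t‖ ^ 2)) t v) =
        fun t => ψ' (‖x - t‖ ^ 2) * (-2 * inner ℝ (x - t) v) := by
      ext t
      rw [(hasFDerivAt_comp_norm_sub_sq (hψ' _)).fderiv]
      simp [inner_sub_left]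
    have hinner : HasFDerivAt (fun t => -2 * inner ℝ (x - t) v) ((2 : ℝ) • innerSL ℝ v) t := by
      refine (((((hasFDerivAt_id t).const_sub x).inner ℝ (hasFDerivAt_const v t)).const_mul
        (-2)).congr_fderiv ?_)
      ext w
      simp [real_inner_comm]
    rw [hfst, ((hasFDerivAt_comp_norm_sub_sq (hψ'' _)).fun_mul hinner).fderiv]
    simp only [inner_sub_left, neg_mul, map_sub, neg_smul, smul_neg, neg_neg, add_apply,
      smul_apply, coe_innerSL_apply, inner_self_eq_norm_sq_to_K, hv, ringHom_apply, one_pow,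
      smul_eq_mul, mul_one, sub_apply]
    ring
  have hsmooth : ContDiff ℝ 2 fun t => ψ (‖x - t‖ ^ 2) :=
    hψ.comp ((contDiff_const.sub contDiff_id).norm_sq ℝ)
  rw [laplacian_eq_sum_fderiv hsmooth (stdOrthonormalBasis ℝ E),
    Finset.sum_congr rfl fun i _ => hsnd ((stdOrthonormalBasis ℝ E).norm_eq_one i),
    Finset.sum_add_distrib, ← Finset.mul_sum, (stdOrthonormalBasis ℝ E).sum_sq_inner_left]
  simp only [Finset.sum_const, Finset.card_univ, Fintype.card_fin, nsmul_eq_mul]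
  ring

variable [MeasurableSpace E] [BorelSpace E] {μ : Measure E} [μ.IsAddHaarMeasure] {u φ : E → ℝ}

lemma integral_mul_laplacian (hu : ContDiff ℝ 2 u) (hφ : ContDiff ℝ 2 φ)
    (hc : HasCompactSupport φ) : ∫ x, u x * Δ φ x ∂μ = ∫ x, Δ u x * φ x ∂μ := by
  have hderiv {w : E → ℝ} (hw : ContDiff ℝ 2 w) (v : E) :
      ContDiff ℝ 1 fun x => fderiv ℝ w x v :=
    (hw.fderiv_right (m := 1) le_rfl).clm_apply contDiff_const
  have hderiv2 {w : E → ℝ} (hw : ContDiff ℝ 2 w) (v : E) :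
      Continuous fun x => fderiv ℝ (fun y => fderiv ℝ w y v) x v :=
    ((hderiv hw v).continuous_fderiv one_ne_zero).clm_apply continuous_const
  let b := stdOrthonormalBasis ℝ E
  simp only [laplacian_eq_sum_fderiv hu b, laplacian_eq_sum_fderiv hφ b, Finset.mul_sum,
    Finset.sum_mul]
  have hint (i) : Integrable (fun x => u x * fderiv ℝ (fun y => fderiv ℝ φ y (b i)) x (b i)) μ :=
    (hu.continuous.mul (hderiv2 hφ (b i))).integrable_of_hasCompactSupport
      ((hc.fderiv_apply ℝ (b i)).fderiv_apply ℝ (b i)).mul_left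
  have hint' (i) : Integrable (fun x => fderiv ℝ (fun y => fderiv ℝ u y (b i)) x (b i) * φ x) μ :=
    ((hderiv2 hu (b i)).mul hφ.continuous).integrable_of_hasCompactSupport hc.mul_left
  rw [integral_finsetSum _ fun i _ => hint i, integral_finsetSum _ fun i _ => hint' i]
  refine Finset.sum_congr rfl fun i _ => ?_
  rw [integral_mul_fderiv_eq_neg_fderiv_mul_of_hasCompactSupport (hu.of_le one_le_two)
      (hderiv hφ (b i)) (hc.fderiv_apply ℝ (b i)) (b i),
    integral_mul_fderiv_eq_neg_fderiv_mul_of_hasCompactSupport (hderiv hu (b i))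
      (hφ.of_le one_le_two) hc (b i), neg_neg]

end Laplacian

section Epanechnikov

variable {E : Type*} [NormedAddCommGroup E] [InnerProductSpace ℝ E] [FiniteDimensional ℝ E]
  [MeasurableSpace E] [BorelSpace E] {r d : ℝ} {u v : E → ℝ} {x y z : E}

/-- The probability density on the ball of radius `r` proportional to `1 - ‖y‖ ^ 2 / r ^ 2`. -/
noncomputable def epanechnikovKernel (r : ℝ) (y : E) : ℝ :=
  (finrank ℝ E + 2) / (2 * volume.real (ball (0 : E) 1) * r ^ finrank ℝ E) *
    max (1 - ‖y‖ ^ 2 / r ^ 2) 0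

lemma measureReal_unitBall_pos : 0 < volume.real (ball (0 : E) 1) :=
  ENNReal.toReal_pos (measure_ball_pos _ _ one_pos).ne' measure_ball_lt_top.ne

lemma epanechnikovKernel_nonneg (hr : 0 ≤ r) (y : E) : 0 ≤ epanechnikovKernel r y := by
  unfold epanechnikovKernel
  positivity

lemma epanechnikovKernel_of_le (hr : 0 < r) (h : r ≤ ‖y‖) : epanechnikovKernel r y = 0 := by
  have : 1 ≤ ‖y‖ ^ 2 / r ^ 2 := (one_le_div (by positivity)).2 (by gcongr)
  rw [epanechnikovKernel, max_eq_right (sub_nonpos.2 this), mul_zero]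

lemma epanechnikovKernel_le (hr : 0 ≤ r) (y : E) :
    epanechnikovKernel r y ≤
      (finrank ℝ E + 2) / (2 * volume.real (ball (0 : E) 1) * r ^ finrank ℝ E) := by
  refine mul_le_of_le_one_right (by positivity) (max_le ?_ zero_le_one)
  have : 0 ≤ ‖y‖ ^ 2 / r ^ 2 := by positivity
  linarith

lemma continuous_epanechnikovKernel : Continuous (epanechnikovKernel r : E → ℝ) := by
  unfold epanechnikovKernel
  fun_prop

lemma support_epanechnikovKernel_subset (hr : 0 < r) :
    Function.support (epanechnikovKernel r : E → ℝ) ⊆ ball 0 r := fun y hy => by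
  rw [mem_ball_zero_iff]
  exact lt_of_not_ge fun h => hy (epanechnikovKernel_of_le hr h)

lemma integral_pow_mul_max (k : ℕ) (hr : 0 < r) :
    ∫ y in Ioi (0 : ℝ), y ^ k * max (1 - y ^ 2 / r ^ 2) 0 =
      2 * r ^ (k + 1) / ((k + 1) * (k + 3)) := by
  have hbeyond : ∀ y ∈ Ioi (0 : ℝ) \ Ioc 0 r, y ^ k * max (1 - y ^ 2 / r ^ 2) 0 = 0 := by
    rintro y ⟨hy, hyr⟩
    have hry : r ≤ y := le_of_not_ge fun h => hyr ⟨hy, h⟩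
    have : 1 ≤ y ^ 2 / r ^ 2 := (one_le_div (by positivity)).2 (by gcongr)
    rw [max_eq_right (sub_nonpos.2 this), mul_zero]
  have hinside : ∀ y ∈ Ioc (0 : ℝ) r,
      y ^ k * max (1 - y ^ 2 / r ^ 2) 0 = y ^ k - y ^ (k + 2) / r ^ 2 := by
    rintro y ⟨hy, hyr⟩
    have : y ^ 2 / r ^ 2 ≤ 1 := (div_le_one (by positivity)).2 (by gcongr)
    rw [max_eq_left (sub_nonneg.2 this)]
    ring
  calc ∫ y in Ioi (0 : ℝ), y ^ k * max (1 - y ^ 2 / r ^ 2) 0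
      = ∫ y in Ioc (0 : ℝ) r, y ^ k * max (1 - y ^ 2 / r ^ 2) 0 :=
        setIntegral_eq_of_subset_of_forall_sdiff_eq_zero measurableSet_Ioi
          Ioc_subset_Ioi_self hbeyond
    _ = ∫ y in (0 : ℝ)..r, (y ^ k - y ^ (k + 2) / r ^ 2) := by
        rw [setIntegral_congr_fun measurableSet_Ioc hinside, intervalIntegral.integral_of_le hr.le]
    _ = 2 * r ^ (k + 1) / ((k + 1) * (k + 3)) := by
        rw [intervalIntegral.integral_sub (by simp) (by simp), intervalIntegral.integral_div,
          integral_pow, integral_pow, zero_pow (by lia), zero_pow (by lia)]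
        push_cast
        field_simp
        ring

lemma integral_epanechnikovKernel [Nontrivial E] (hr : 0 < r) :
    ∫ y : E, epanechnikovKernel r y = 1 := by
  have hω : 0 < volume.real (ball (0 : E) 1) := measureReal_unitBall_pos
  unfold epanechnikovKernel
  rw [integral_const_mul, integral_fun_norm_addHaar volume fun s => max (1 - s ^ 2 / r ^ 2) 0]
  simp only [smul_eq_mul, nsmul_eq_mul]
  rw [integral_pow_mul_max _ hr]
  obtain ⟨k, hk⟩ := Nat.exists_eq_add_one.2 (finrank_pos (R := ℝ) (M := E))
  rw [hk, Nat.add_sub_cancel]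
  push_cast
  field_simp
  ring

lemma epanechnikovKernel_le_of_dist_le (hr : 0 < r) (h : ‖y - z‖ ≤ d) :
    epanechnikovKernel r y ≤
      ((r + d) / r) ^ (finrank ℝ E + 2) * epanechnikovKernel (r + d) z := by
  have hω : 0 < volume.real (ball (0 : E) 1) := measureReal_unitBall_pos
  have hd : 0 ≤ d := (norm_nonneg _).trans h
  have hz : ‖z‖ ≤ ‖y‖ + d := by
    have := norm_sub_norm_le z y
    rw [norm_sub_rev] at this
    linarith
  have hmain : 1 - ‖y‖ ^ 2 / r ^ 2 ≤
      ((r + d) / r) ^ 2 * max (1 - ‖z‖ ^ 2 / (r + d) ^ 2) 0 := by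
    rcases le_or_gt r ‖y‖ with hy | hy
    · have : 1 ≤ ‖y‖ ^ 2 / r ^ 2 := (one_le_div (by positivity)).2 (by gcongr)
      exact (sub_nonpos.2 this).trans (by positivity)
    · calc 1 - ‖y‖ ^ 2 / r ^ 2
          = (r ^ 2 - ‖y‖ ^ 2) / r ^ 2 := by field_simp
        _ ≤ ((r + d) ^ 2 - ‖z‖ ^ 2) / r ^ 2 := by
          gcongr ?_ / _
          nlinarith [pow_le_pow_left₀ (norm_nonneg z) hz 2]
        _ = ((r + d) / r) ^ 2 * (1 - ‖z‖ ^ 2 / (r + d) ^ 2) := by field_simp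
        _ ≤ ((r + d) / r) ^ 2 * max (1 - ‖z‖ ^ 2 / (r + d) ^ 2) 0 := by
          gcongr
          exact le_max_left _ _
  calc epanechnikovKernel r y
      ≤ (finrank ℝ E + 2) / (2 * volume.real (ball (0 : E) 1) * r ^ finrank ℝ E) *
          (((r + d) / r) ^ 2 * max (1 - ‖z‖ ^ 2 / (r + d) ^ 2) 0) := by
        unfold epanechnikovKernel
        gcongr
        exact max_le hmain (by positivity)
    _ = ((r + d) / r) ^ (finrank ℝ E + 2) * epanechnikovKernel (r + d) z := by
        unfold epanechnikovKernel
        rw [pow_add, div_pow _ _ (finrank ℝ E)]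
        field_simp

/-- The average of `u` around `x` with respect to `epanechnikovKernel r`. -/
noncomputable def epanechnikovMean (u : E → ℝ) (r : ℝ) (x : E) : ℝ :=
  ∫ t, epanechnikovKernel r (x - t) * u t

lemma integrable_epanechnikovKernel_sub_mul (hr : 0 < r) (hu : Continuous u) (x : E) :
    Integrable fun t => epanechnikovKernel r (x - t) * u t := by
  refine ((continuous_epanechnikovKernel.comp (by fun_prop)).mul
    hu).integrable_of_hasCompactSupport ?_
  refine HasCompactSupport.intro (isCompact_closedBall x r) fun t ht => ?_
  rw [mem_closedBall', dist_eq_norm, not_le] at ht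
  simp [epanechnikovKernel_of_le hr ht.le]

lemma epanechnikovMean_const [Nontrivial E] (hr : 0 < r) (c : ℝ) (x : E) :
    epanechnikovMean (fun _ => c) r x = c := by
  rw [epanechnikovMean, integral_mul_const, integral_sub_left_eq_self (epanechnikovKernel r),
    integral_epanechnikovKernel hr, one_mul]

lemma epanechnikovMean_sub (hr : 0 < r) (hu : Continuous u) (hv : Continuous v) (x : E) :
    epanechnikovMean (fun t => u t - v t) r x =
      epanechnikovMean u r x - epanechnikovMean v r x := by
  simp only [epanechnikovMean, mul_sub]
  exact integral_sub (integrable_epanechnikovKernel_sub_mul hr hu x)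
    (integrable_epanechnikovKernel_sub_mul hr hv x)

lemma epanechnikovMean_mono (hr : 0 < r) (hu : Continuous u) (hv : Continuous v) (huv : u ≤ v)
    (x : E) : epanechnikovMean u r x ≤ epanechnikovMean v r x :=
  integral_mono (integrable_epanechnikovKernel_sub_mul hr hu x)
    (integrable_epanechnikovKernel_sub_mul hr hv x) fun t =>
      mul_le_mul_of_nonneg_left (huv t) (epanechnikovKernel_nonneg hr.le _)

lemma epanechnikovMean_le_of_dist_le (hr : 0 < r) (hu : Continuous u) (hu₀ : 0 ≤ u)
    (h : ‖x - z‖ ≤ d) : epanechnikovMean u r x ≤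
      ((r + d) / r) ^ (finrank ℝ E + 2) * epanechnikovMean u (r + d) z := by
  have hd : 0 ≤ d := (norm_nonneg _).trans h
  unfold epanechnikovMean
  rw [← integral_const_mul]
  refine integral_mono (integrable_epanechnikovKernel_sub_mul hr hu x)
    ((integrable_epanechnikovKernel_sub_mul (by linarith) hu z).const_mul _) fun t => ?_
  simp only [← mul_assoc]
  exact mul_le_mul_of_nonneg_right
    (epanechnikovKernel_le_of_dist_le hr (by simpa using h)) (hu₀ t)

lemma tendsto_epanechnikovMean_nhdsGT_zero [Nontrivial E] (hu : Continuous u) (x : E) :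
    Tendsto (fun r => epanechnikovMean u r x) (𝓝[>] 0) (𝓝 (u x)) := by
  have hsupp : Tendsto (fun r => Function.support (epanechnikovKernel r : E → ℝ)) (𝓝[>] 0)
      (𝓝 0).smallSets := by
    refine (nhds_basis_ball.smallSets.tendsto_right_iff).2 fun ε hε => ?_
    filter_upwards [Ioo_mem_nhdsGT hε] with r hr
      using (support_epanechnikovKernel_subset hr.1).trans (ball_subset_ball hr.2.le)
  have := convolution_tendsto_right (μ := volume) (l := 𝓝[>] (0 : ℝ)) (g := fun _ => u)
    (k := fun _ => x)
    (eventually_mem_nhdsWithin.mono fun r hr => epanechnikovKernel_nonneg (le_of_lt hr))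
    (eventually_mem_nhdsWithin.mono fun r hr => integral_epanechnikovKernel hr) hsupp
    (Eventually.of_forall fun _ => hu.aestronglyMeasurable)
    ((hu.tendsto x).comp tendsto_snd) tendsto_const_nhds
  simpa only [convolution_eq_swap, ContinuousLinearMap.lsmul_apply, smul_eq_mul,
    epanechnikovMean] using this

lemma tendsto_epanechnikovMean_atTop [Nontrivial E] (hu : Continuous u)
    (hc : HasCompactSupport u) (x : E) :
    Tendsto (fun r => epanechnikovMean u r x) atTop (𝓝 0) := by
  have hω : 0 < volume.real (ball (0 : E) 1) := measureReal_unitBall_pos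
  have hpow : Tendsto (fun r : ℝ => (finrank ℝ E + 2) /
      (2 * volume.real (ball (0 : E) 1) * r ^ finrank ℝ E) * ∫ t, ‖u t‖) atTop (𝓝 0) := by
    have hdiv := (tendsto_pow_atTop (α := ℝ) (finrank_pos (R := ℝ) (M := E)).ne').const_mul_atTop
      (show 0 < 2 * volume.real (ball (0 : E) 1) by positivity)
    simpa using (tendsto_const_nhds.div_atTop hdiv).mul_const (∫ t, ‖u t‖)
  refine squeeze_zero_norm' ?_ hpow
  filter_upwards [eventually_gt_atTop 0] with r hr
  rw [← integral_const_mul]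
  refine norm_integral_le_of_norm_le
    ((hu.integrable_of_hasCompactSupport hc).norm.const_mul _) (ae_of_all _ fun t => ?_)
  rw [norm_mul, norm_of_nonneg (epanechnikovKernel_nonneg hr.le _)]
  gcongr
  exact epanechnikovKernel_le hr.le _

end Epanechnikov

section NewtonKernel

variable {E : Type*} [NormedAddCommGroup E] [InnerProductSpace ℝ E] [FiniteDimensional ℝ E]
  [MeasurableSpace E] [BorelSpace E]

lemma locallyIntegrable_norm_sub_rpow [Nontrivial E] {μ : Measure E} [μ.IsAddHaarMeasure] {s : ℝ}
    (hs : -finrank ℝ E < s) (x : E) : LocallyIntegrable (fun t => ‖x - t‖ ^ s) μ := by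
  refine (locallyIntegrable_iff (μ := μ)).2 fun K hK => ?_
  obtain ⟨r, hr, hKr⟩ := hK.isBounded.subset_ball_lt 0 x
  have hball : IntegrableOn (fun y : E => ‖y‖ ^ s) (ball 0 r) μ := by
    refine (integrableOn_fun_norm_addHaar μ (f := fun y : ℝ => y ^ s)).2 ?_
    have hpow : IntegrableOn (fun y : ℝ => y ^ (finrank ℝ E - 1 + s)) (Ioo 0 r) :=
      (intervalIntegral.integrableOn_Ioo_rpow_iff hr).2 (by linarith)
    refine hpow.congr_fun (fun y hy => ?_) measurableSet_Ioo
    simp only [smul_eq_mul, ← rpow_natCast]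
    rw [rpow_add hy.1, Nat.cast_pred finrank_pos]
  have htranslate := ((integrable_indicator_iff measurableSet_ball).2 hball).comp_sub_left x
  refine IntegrableOn.mono_set ((integrable_indicator_iff measurableSet_ball).1
    (htranslate.congr (ae_of_all _ fun t => ?_))) hKr
  simp only [indicator, mem_ball', dist_eq_norm, zero_sub, norm_neg]

variable (E) in
/-- The constant `n (n - 2) ω_n` normalizing the fundamental solution of `-Δ` in dimension `n`. -/
noncomputable def newtonConst : ℝ :=
  finrank ℝ E * (finrank ℝ E - 2) * volume.real (ball (0 : E) 1)

/-- The fundamental solution `‖y‖ ^ (2 - n) / (n (n - 2) ω_n)` of `-Δ` in dimension `n ≥ 3`. -/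
noncomputable def newtonKernel (y : E) : ℝ :=
  (newtonConst E)⁻¹ * (‖y‖ ^ 2) ^ (1 - finrank ℝ E / 2 : ℝ)

/-- The Newton kernel smoothed to class `C²` inside the ball of radius `r`. -/
noncomputable def truncNewtonKernel (r : ℝ) (y : E) : ℝ :=
  (newtonConst E)⁻¹ * taylorRpow (1 - finrank ℝ E / 2) (r ^ 2) (‖y‖ ^ 2)

/-- The Newton kernel minus its smoothing. In the representation of `u` by `Δ u` over the ball of
radius `r` and the Epanechnikov mean of `u`, it plays the role of Green's function. -/
noncomputable def greenKernel (r : ℝ) (y : E) : ℝ := newtonKernel y - truncNewtonKernel r y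

variable {r : ℝ} {x y : E}

lemma newtonKernel_eq (y : E) :
    newtonKernel y = (newtonConst E)⁻¹ * ‖y‖ ^ (2 - finrank ℝ E : ℝ) := by
  rw [newtonKernel, ← rpow_natCast ‖y‖ 2, ← rpow_mul (norm_nonneg y)]
  congr 2
  push_cast
  ring

lemma contDiff_truncNewtonKernel_sub (hr : 0 < r) (x : E) :
    ContDiff ℝ 2 fun t => truncNewtonKernel r (x - t) :=
  contDiff_const.mul ((contDiff_taylorRpow (by positivity)).comp
    ((contDiff_const.sub contDiff_id).norm_sq ℝ))

lemma tendsto_greenKernel_nhdsGT_zero (hy : y ≠ 0) :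
    Tendsto (fun r => greenKernel r y) (𝓝[>] 0) (𝓝 0) := by
  refine tendsto_const_nhds.congr' ?_
  filter_upwards [Ioo_mem_nhdsGT (norm_pos_iff.2 hy)] with r hr
  have : r ^ 2 ≤ ‖y‖ ^ 2 := pow_le_pow_left₀ hr.1.le hr.2.le 2
  rw [greenKernel, newtonKernel, truncNewtonKernel, taylorRpow_of_le (pow_pos hr.1 2) this,
    sub_self]

lemma greenKernel_of_le (hr : 0 < r) (h : r ≤ ‖y‖) : greenKernel r y = 0 := by
  have : r ^ 2 ≤ ‖y‖ ^ 2 := by gcongr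
  rw [greenKernel, newtonKernel, truncNewtonKernel, taylorRpow_of_le (by positivity) this,
    sub_self]

variable (hn : 3 ≤ finrank ℝ E)
include hn

lemma newtonConst_pos : 0 < newtonConst E := by
  have hn' : (3 : ℝ) ≤ finrank ℝ E := by exact_mod_cast hn
  have hω : 0 < volume.real (ball (0 : E) 1) := measureReal_unitBall_pos
  have : 0 < (finrank ℝ E - 2 : ℝ) := by linarith
  unfold newtonConst
  positivity

lemma newtonKernel_nonneg (y : E) : 0 ≤ newtonKernel y := by
  have := newtonConst_pos hn
  unfold newtonKernel
  positivity

lemma laplacian_truncNewtonKernel_sub (hr : 0 < r) (x t : E) :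
    Δ (fun t => truncNewtonKernel r (x - t)) t = -epanechnikovKernel r (x - t) := by
  have hn' : (3 : ℝ) ≤ finrank ℝ E := by exact_mod_cast hn
  have hω : 0 < volume.real (ball (0 : E) 1) := measureReal_unitBall_pos
  have hT : 0 < r ^ 2 := by positivity
  set p : ℝ := 1 - finrank ℝ E / 2 with hp
  have hdim : (finrank ℝ E : ℝ) = 2 - 2 * p := by rw [hp]; ring
  have hpow : (r ^ 2) ^ (p - 1) = (r ^ finrank ℝ E)⁻¹ := by
    rw [← rpow_natCast r 2, ← rpow_mul hr.le, ← rpow_natCast, ← rpow_neg hr.le, hp]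
    congr 1
    push_cast
    ring
  have hcoeff : (newtonConst E)⁻¹ * (4 * p * (p - 1) * (2 - p)) =
      (finrank ℝ E + 2) / (2 * volume.real (ball (0 : E) 1)) := by
    have : (finrank ℝ E - 2 : ℝ) ≠ 0 := by linarith
    rw [newtonConst, hp]
    field_simp
    ring
  calc Δ (fun t => truncNewtonKernel r (x - t)) t
      = (newtonConst E)⁻¹ * Δ (fun t => taylorRpow p (r ^ 2) (‖x - t‖ ^ 2)) t :=
        laplacian_smul (newtonConst E)⁻¹ ((contDiff_taylorRpow hT).comp
          ((contDiff_const.sub contDiff_id).norm_sq ℝ)).contDiffAt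
    _ = -((newtonConst E)⁻¹ * (4 * p * (p - 1) * (2 - p)) * (r ^ 2) ^ (p - 1) *
          max (1 - ‖x - t‖ ^ 2 / r ^ 2) 0) := by
        rw [laplacian_comp_norm_sub_sq (contDiff_taylorRpow hT) (hasDerivAt_taylorRpow hT)
          (hasDerivAt_taylorRpowDeriv hT), hdim, taylorRpow_radial_laplacian hT]
        ring
    _ = -epanechnikovKernel r (x - t) := by
        rw [hcoeff, hpow, epanechnikovKernel, ← div_eq_mul_inv, div_div]

lemma greenKernel_le_newtonKernel (hr : 0 < r) (y : E) : greenKernel r y ≤ newtonKernel y := by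
  have hn' : (3 : ℝ) ≤ finrank ℝ E := by exact_mod_cast hn
  exact sub_le_self _ (mul_nonneg (inv_nonneg.2 (newtonConst_pos hn).le)
    (taylorRpow_nonneg (by linarith) (by positivity) (by positivity)))

lemma greenKernel_nonneg (hr : 0 < r) (hy : y ≠ 0) : 0 ≤ greenKernel r y := by
  have hn' : (3 : ℝ) ≤ finrank ℝ E := by exact_mod_cast hn
  exact sub_nonneg.2 (mul_le_mul_of_nonneg_left
    (taylorRpow_le_rpow (by linarith) (by positivity) (by positivity))
    (inv_nonneg.2 (newtonConst_pos hn).le))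

lemma tendsto_greenKernel_atTop (y : E) :
    Tendsto (fun r => greenKernel r y) atTop (𝓝 (newtonKernel y)) := by
  have hn' : (3 : ℝ) ≤ finrank ℝ E := by exact_mod_cast hn
  simpa [greenKernel, truncNewtonKernel] using (((tendsto_taylorRpow_atTop
    (p := 1 - finrank ℝ E / 2) (by linarith) (‖y‖ ^ 2)).comp
      (tendsto_pow_atTop two_ne_zero)).const_mul (newtonConst E)⁻¹).const_sub (newtonKernel y)

end NewtonKernel

section GreenRepresentation

variable {E : Type*} [NormedAddCommGroup E] [InnerProductSpace ℝ E] [FiniteDimensional ℝ E]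
  [MeasurableSpace E] [BorelSpace E] {r R : ℝ} {h u : E → ℝ}

lemma aestronglyMeasurable_greenKernel_sub_mul (hr : 0 < r) (hh : Continuous h) (x : E) :
    AEStronglyMeasurable fun t => greenKernel r (x - t) * h t := by
  have hnewton : Measurable fun t => newtonKernel (x - t) := by
    unfold newtonKernel
    fun_prop
  exact ((hnewton.sub (contDiff_truncNewtonKernel_sub hr x).continuous.measurable).mul
    hh.measurable).aestronglyMeasurable

variable (hn : 3 ≤ finrank ℝ E)
include hn

lemma locallyIntegrable_newtonKernel_sub_mul (hh : Continuous h) (x : E) :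
    LocallyIntegrable fun t => newtonKernel (x - t) * h t := by
  have : Nontrivial E := nontrivial_of_finrank_pos (R := ℝ) (by lia)
  simp only [newtonKernel_eq]
  exact ((locallyIntegrable_norm_sub_rpow (by linarith) x).smul (newtonConst E)⁻¹).mul_continuous hh

lemma integrable_newtonKernel_sub_mul_of_hasCompactSupport (hh : Continuous h)
    (hc : HasCompactSupport h) (x : E) : Integrable fun t => newtonKernel (x - t) * h t := by
  refine (integrableOn_iff_integrable_of_support_subset fun t ht => subset_tsupport h ?_).1
    ((locallyIntegrable_newtonKernel_sub_mul hn hh x).integrableOn_isCompact hc.isCompact)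
  exact right_ne_zero_of_mul ht

lemma ae_greenKernel_sub_nonneg (hr : 0 < r) (x : E) : ∀ᵐ t, 0 ≤ greenKernel r (x - t) := by
  have : Nontrivial E := nontrivial_of_finrank_pos (R := ℝ) (by lia)
  filter_upwards [Measure.ae_ne volume x] with t ht
    using greenKernel_nonneg hn hr (sub_ne_zero.2 ht.symm)

lemma ae_norm_greenKernel_sub_mul_le (hr : 0 < r) (h : E → ℝ) (x : E) :
    ∀ᵐ t, ‖greenKernel r (x - t) * h t‖ ≤ ‖newtonKernel (x - t) * h t‖ := by
  filter_upwards [ae_greenKernel_sub_nonneg hn hr x] with t ht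
  rw [norm_mul, norm_mul, norm_of_nonneg ht, norm_of_nonneg (newtonKernel_nonneg hn _)]
  exact mul_le_mul_of_nonneg_right (greenKernel_le_newtonKernel hn hr _) (norm_nonneg _)

lemma ae_norm_greenKernel_sub_mul_le_indicator (hr : 0 < r) (hrR : r ≤ R) (h : E → ℝ) (x : E) :
    ∀ᵐ t, ‖greenKernel r (x - t) * h t‖ ≤
      ‖(closedBall x R).indicator (fun t => newtonKernel (x - t) * h t) t‖ := by
  filter_upwards [ae_norm_greenKernel_sub_mul_le hn hr h x] with t ht
  by_cases htR : t ∈ closedBall x R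
  · rwa [indicator_of_mem htR]
  · rw [mem_closedBall', dist_eq_norm, not_le] at htR
    rw [greenKernel_of_le hr (hrR.trans htR.le), zero_mul, norm_zero]
    exact norm_nonneg _

lemma integrable_indicator_newtonKernel_sub_mul (hh : Continuous h) (R : ℝ) (x : E) :
    Integrable ((closedBall x R).indicator fun t => newtonKernel (x - t) * h t) :=
  ((locallyIntegrable_newtonKernel_sub_mul hn hh x).integrableOn_isCompact
    (isCompact_closedBall x R)).integrable_indicator measurableSet_closedBall

lemma integrable_greenKernel_sub_mul (hr : 0 < r) (hh : Continuous h) (x : E) :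
    Integrable fun t => greenKernel r (x - t) * h t :=
  (integrable_indicator_newtonKernel_sub_mul hn hh r x).norm.mono'
    (aestronglyMeasurable_greenKernel_sub_mul hr hh x)
    (ae_norm_greenKernel_sub_mul_le_indicator hn hr le_rfl h x)

lemma tendsto_integral_greenKernel_nhdsGT_zero (hh : Continuous h) (x : E) :
    Tendsto (fun r => ∫ t, greenKernel r (x - t) * h t) (𝓝[>] 0) (𝓝 0) := by
  have : Nontrivial E := nontrivial_of_finrank_pos (R := ℝ) (by lia)
  suffices Tendsto (fun r => ∫ t, greenKernel r (x - t) * h t) (𝓝[>] 0) (𝓝 (∫ _ : E, (0 : ℝ))) by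
    simpa only [integral_zero] using this
  refine tendsto_integral_filter_of_dominated_convergence _ ?_ ?_
    (integrable_indicator_newtonKernel_sub_mul hn hh 1 x).norm ?_
  · filter_upwards [self_mem_nhdsWithin] with r hr
      using aestronglyMeasurable_greenKernel_sub_mul hr hh x
  · filter_upwards [Ioo_mem_nhdsGT one_pos] with r hr
      using ae_norm_greenKernel_sub_mul_le_indicator hn hr.1 hr.2.le h x
  · filter_upwards [Measure.ae_ne volume x] with t ht
    simpa using (tendsto_greenKernel_nhdsGT_zero (sub_ne_zero.2 ht.symm)).mul_const (h t)

lemma tendsto_integral_greenKernel_atTop {x : E} (hh : Continuous h)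
    (hi : Integrable fun t => newtonKernel (x - t) * h t) :
    Tendsto (fun r => ∫ t, greenKernel r (x - t) * h t) atTop
      (𝓝 (∫ t, newtonKernel (x - t) * h t)) := by
  refine tendsto_integral_filter_of_dominated_convergence _ ?_ ?_ hi.norm ?_
  · filter_upwards [eventually_gt_atTop 0] with r hr
      using aestronglyMeasurable_greenKernel_sub_mul hr hh x
  · filter_upwards [eventually_gt_atTop 0] with r hr using ae_norm_greenKernel_sub_mul_le hn hr h x
  · exact ae_of_all _ fun t => (tendsto_greenKernel_atTop hn _).mul_const (h t)

lemma epanechnikovMean_sub_epanechnikovMean (hu : ContDiff ℝ 2 u) (hr : 0 < r) (hrR : r ≤ R)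
    (x : E) : epanechnikovMean u r x - epanechnikovMean u R x =
      ∫ t, (greenKernel R (x - t) - greenKernel r (x - t)) * -Δ u t := by
  have hR : 0 < R := hr.trans_le hrR
  set φ : E → ℝ := (fun t => truncNewtonKernel r (x - t)) - fun t => truncNewtonKernel R (x - t)
    with hφ_def
  have hφ_green (t) : φ t = greenKernel R (x - t) - greenKernel r (x - t) :=
    (sub_sub_sub_cancel_left _ _ _).symm
  have hφ : ContDiff ℝ 2 φ :=
    (contDiff_truncNewtonKernel_sub hr x).sub (contDiff_truncNewtonKernel_sub hR x)
  have hc : HasCompactSupport φ := by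
    refine HasCompactSupport.intro (isCompact_closedBall x R) fun t ht => ?_
    rw [mem_closedBall', dist_eq_norm, not_le] at ht
    rw [hφ_green, greenKernel_of_le hR ht.le, greenKernel_of_le hr (hrR.trans ht.le), sub_zero]
  have hΔφ (t) : Δ φ t = epanechnikovKernel R (x - t) - epanechnikovKernel r (x - t) := by
    rw [hφ_def, (contDiff_truncNewtonKernel_sub hr x).contDiffAt.laplacian_sub
      (contDiff_truncNewtonKernel_sub hR x).contDiffAt, laplacian_truncNewtonKernel_sub hn hr,
      laplacian_truncNewtonKernel_sub hn hR, neg_sub_neg]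
  calc epanechnikovMean u r x - epanechnikovMean u R x = -∫ t, u t * Δ φ t := by
        rw [epanechnikovMean, epanechnikovMean,
          ← integral_sub (integrable_epanechnikovKernel_sub_mul hr hu.continuous x)
          (integrable_epanechnikovKernel_sub_mul hR hu.continuous x), ← integral_neg]
        congr with t
        rw [hΔφ]
        ring
    _ = ∫ t, (greenKernel R (x - t) - greenKernel r (x - t)) * -Δ u t := by
        simp only [integral_mul_laplacian hu hφ hc, ← integral_neg, hφ_green, mul_neg, mul_comm]

lemma eq_epanechnikovMean_add_integral_greenKernel (hu : ContDiff ℝ 2 u) (hR : 0 < R) (x : E) :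
    u x = epanechnikovMean u R x + ∫ t, greenKernel R (x - t) * -Δ u t := by
  have : Nontrivial E := nontrivial_of_finrank_pos (R := ℝ) (by lia)
  have hcont : Continuous fun t => -Δ u t := (continuous_laplacian hu).neg
  have hlim := (tendsto_epanechnikovMean_nhdsGT_zero hu.continuous x).add
    (tendsto_integral_greenKernel_nhdsGT_zero hn hcont x)
  rw [add_zero] at hlim
  refine tendsto_nhds_unique (hlim.congr' ?_) tendsto_const_nhds
  filter_upwards [Ioo_mem_nhdsGT hR] with r hr
  have hmean := epanechnikovMean_sub_epanechnikovMean hn hu hr.1 hr.2.le x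
  simp only [sub_mul] at hmean
  rw [integral_sub (integrable_greenKernel_sub_mul hn hR hcont x)
    (integrable_greenKernel_sub_mul hn hr.1 hcont x)] at hmean
  linarith

end GreenRepresentation

section Fatou

variable {β : Type*} [MeasurableSpace β] {μ : Measure β} {F : ℕ → β → ℝ} {f g : β → ℝ} {C : ℝ}

lemma integrable_of_tendsto_of_integral_le (hF : ∀ k, Integrable (F k) μ)
    (hF₀ : ∀ k, 0 ≤ᵐ[μ] F k) (hC : ∀ k, ∫ y, F k y ∂μ ≤ C)
    (hlim : ∀ᵐ y ∂μ, Tendsto (fun k => F k y) atTop (𝓝 (f y))) : Integrable f μ := by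
  refine ⟨aestronglyMeasurable_of_tendsto_ae _ (fun k => (hF k).aestronglyMeasurable) hlim, ?_⟩
  have hbound (k) : ∫⁻ y, ‖F k y‖ₑ ∂μ ≤ ENNReal.ofReal C := by
    rw [← ofReal_integral_norm_eq_lintegral_enorm (hF k),
      integral_congr_ae ((hF₀ k).mono fun y hy => norm_of_nonneg hy)]
    exact ENNReal.ofReal_le_ofReal (hC k)
  calc ∫⁻ y, ‖f y‖ₑ ∂μ = ∫⁻ y, liminf (fun k => ‖F k y‖ₑ) atTop ∂μ :=
        lintegral_congr_ae (hlim.mono fun y hy => hy.enorm.liminf_eq.symm)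
    _ ≤ liminf (fun k => ∫⁻ y, ‖F k y‖ₑ ∂μ) atTop :=
        lintegral_liminf_le' fun k => (hF k).aestronglyMeasurable.enorm
    _ ≤ ENNReal.ofReal C := liminf_le_of_le (by isBoundedDefault) fun c hc =>
        hc.exists.elim fun k hk => hk.trans (hbound k)
    _ < ⊤ := ENNReal.ofReal_lt_top

lemma integrable_of_tendsto_of_le_of_integral_le (hF : ∀ k, Integrable (F k) μ)
    (hg : Integrable g μ) (hgF : ∀ k, g ≤ᵐ[μ] F k) (hC : ∀ k, ∫ y, F k y ∂μ ≤ C)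
    (hlim : ∀ᵐ y ∂μ, Tendsto (fun k => F k y) atTop (𝓝 (f y))) : Integrable f μ := by
  have hsub : Integrable (f - g) μ :=
    integrable_of_tendsto_of_integral_le (fun k => (hF k).sub hg)
      (fun k => (hgF k).mono fun y => sub_nonneg.2)
      (fun k => (integral_sub (hF k) hg).trans_le (sub_le_sub_right (hC k) _))
      (hlim.mono fun y hy => hy.sub_const (g y))
  simpa using hsub.add hg

end Fatou

section Cocompact

variable {X : Type*} [TopologicalSpace X] {u : X → ℝ}

lemma hasCompactSupport_max_zero_of_eventually_nonpos [T2Space X]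
    (hu : ∀ᶠ x in cocompact X, u x ≤ 0) : HasCompactSupport fun x => max (u x) 0 := by
  rw [hasCompactSupport_iff_eventuallyEq, coclosedCompact_eq_cocompact]
  exact hu.mono fun x => max_eq_right

lemma bddBelow_range_of_isBoundedUnder_cocompact (hu : Continuous u)
    (hbdd : IsBoundedUnder (· ≥ ·) (cocompact X) u) : BddBelow (range u) := by
  obtain ⟨b, hb⟩ := hbdd
  obtain ⟨K, hK, hKb⟩ := mem_cocompact.1 (eventually_map.1 hb)
  have hKc : BddBelow (u '' Kᶜ) := ⟨b, forall_mem_image.2 fun x hx => hKb hx⟩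
  have := (hK.bddBelow_image hu.continuousOn).union hKc
  rwa [← image_union, union_compl_self, image_univ] at this

end Cocompact

section NewtonPotential

variable {E : Type*} [NormedAddCommGroup E] [InnerProductSpace ℝ E] [FiniteDimensional ℝ E]
  [MeasurableSpace E] [BorelSpace E] {u : E → ℝ} {a c : ℝ} {x z : E}

lemma le_of_tendsto_epanechnikovMean_atTop [Nontrivial E] (hu : Continuous u)
    (hb : BddBelow (range u)) (hx : Tendsto (fun r => epanechnikovMean u r x) atTop (𝓝 a))
    (hz : Tendsto (fun r => epanechnikovMean u r z) atTop (𝓝 c)) : a ≤ c := by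
  obtain ⟨b, hb⟩ := hb
  have hshift {r : ℝ} (hr : 0 < r) (y : E) :
      epanechnikovMean (fun t => u t - b) r y = epanechnikovMean u r y - b := by
    rw [epanechnikovMean_sub hr hu continuous_const, epanechnikovMean_const hr]
  have hratio : Tendsto (fun r : ℝ => ((r + ‖x - z‖) / r) ^ (finrank ℝ E + 2)) atTop (𝓝 1) := by
    have h₀ : Tendsto (fun r : ℝ => 1 + ‖x - z‖ / r) atTop (𝓝 (1 + 0)) :=
      (tendsto_const_nhds.div_atTop tendsto_id).const_add 1
    have hpow := h₀.pow (finrank ℝ E + 2)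
    rw [add_zero, one_pow] at hpow
    refine hpow.congr' ?_
    filter_upwards [eventually_gt_atTop 0] with r hr
    rw [add_div, div_self hr.ne']
  have hupper := hratio.mul
    ((hz.comp (tendsto_atTop_add_const_right atTop ‖x - z‖ tendsto_id)).sub_const b)
  rw [one_mul] at hupper
  refine (sub_le_sub_iff_right b).1 (le_of_tendsto_of_tendsto (hx.sub_const b) hupper ?_)
  filter_upwards [eventually_gt_atTop 0] with r hr
  have hle := epanechnikovMean_le_of_dist_le (u := fun t => u t - b) hr (hu.sub continuous_const)
    (fun t => sub_nonneg.2 (hb (mem_range_self t))) (le_refl ‖x - z‖)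
  rwa [hshift hr, hshift (by positivity)] at hle

lemma liminf_le_of_tendsto_epanechnikovMean_atTop [Nontrivial E] (hu : Continuous u)
    (hbdd : IsBoundedUnder (· ≥ ·) (cocompact E) u)
    (hx : Tendsto (fun r => epanechnikovMean u r x) atTop (𝓝 a)) :
    liminf u (cocompact E) ≤ a := by
  refine liminf_le_of_le hbdd fun c hc => ?_
  have hpos : Continuous fun t => max (c - u t) 0 := by fun_prop
  have hlower := (tendsto_epanechnikovMean_atTop hpos
    (hasCompactSupport_max_zero_of_eventually_nonpos (hc.mono fun t => sub_nonpos.2)) x).const_sub c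
  rw [sub_zero] at hlower
  refine le_of_tendsto_of_tendsto hlower hx ?_
  filter_upwards [eventually_gt_atTop 0] with r hr
  calc c - epanechnikovMean (fun t => max (c - u t) 0) r x
      = epanechnikovMean (fun t => c - max (c - u t) 0) r x := by
        rw [epanechnikovMean_sub hr continuous_const hpos, epanechnikovMean_const hr]
    _ ≤ epanechnikovMean u r x := epanechnikovMean_mono hr (continuous_const.sub hpos) hu
        (fun _ => sub_le_comm.1 (le_max_left _ _)) x

/-- The Newtonian potential of `f`, the convolution of `f` with the Newton kernel. -/
noncomputable def newtonPotential (f : E → ℝ) (x : E) : ℝ := ∫ t, newtonKernel (x - t) * f t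

lemma newtonPotential_eq (f : E → ℝ) (x : E) :
    newtonPotential f x =
      1 / newtonConst E * ∫ t, f t / ‖x - t‖ ^ (finrank ℝ E - 2 : ℝ) := by
  rw [newtonPotential, ← integral_const_mul]
  congr with t
  rw [newtonKernel_eq, ← neg_sub (finrank ℝ E : ℝ), rpow_neg (norm_nonneg _)]
  ring

variable (hn : 3 ≤ finrank ℝ E) (hu : ContDiff ℝ 2 u)
include hn hu

lemma integrable_newtonKernel_sub_mul_neg_laplacian (hb : BddBelow (range u))
    (hΔ : ∀ᶠ x in cocompact E, 0 ≤ -Δ u x) (x : E) :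
    Integrable fun t => newtonKernel (x - t) * -Δ u t := by
  have : Nontrivial E := nontrivial_of_finrank_pos (R := ℝ) (by lia)
  have hcont : Continuous (Δ u) := continuous_laplacian hu
  have hnegPart : Integrable fun t => newtonKernel (x - t) * max (Δ u t) 0 :=
    integrable_newtonKernel_sub_mul_of_hasCompactSupport hn (by fun_prop)
      (hasCompactSupport_max_zero_of_eventually_nonpos (hΔ.mono fun t => neg_nonneg.1)) x
  have hpos (k : ℕ) : (0 : ℝ) < k + 1 := k.cast_add_one_pos
  obtain ⟨b, hb⟩ := hb
  refine integrable_of_tendsto_of_le_of_integral_le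
    (F := fun k t => greenKernel (k + 1) (x - t) * -Δ u t) (C := u x - b)
    (fun k => integrable_greenKernel_sub_mul hn (hpos k) hcont.neg x) hnegPart.neg
    (fun k => ?_) (fun k => ?_) (ae_of_all _ fun t => ?_)
  · filter_upwards [ae_greenKernel_sub_nonneg hn (hpos k) x] with t ht
    calc -(newtonKernel (x - t) * max (Δ u t) 0)
        ≤ -(greenKernel (k + 1) (x - t) * max (Δ u t) 0) :=
          neg_le_neg (mul_le_mul_of_nonneg_right
            (greenKernel_le_newtonKernel hn (hpos k) _) (le_max_right _ _))
      _ ≤ greenKernel (k + 1) (x - t) * -Δ u t := by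
          rw [← mul_neg]
          gcongr
          exact le_max_left _ _
  · have hmean : b ≤ epanechnikovMean u (k + 1) x :=
      (epanechnikovMean_const (hpos k) b x).symm.trans_le (epanechnikovMean_mono (hpos k)
        continuous_const hu.continuous (fun t => hb (mem_range_self t)) x)
    linarith [eq_epanechnikovMean_add_integral_greenKernel hn hu (hpos k) x]
  · exact ((tendsto_greenKernel_atTop hn _).comp (tendsto_atTop_add_const_right _ _
      tendsto_natCast_atTop_atTop)).mul_const _

lemma tendsto_epanechnikovMean_atTop_sub_newtonPotential
    (hi : Integrable fun t => newtonKernel (x - t) * -Δ u t) :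
    Tendsto (fun r => epanechnikovMean u r x) atTop
      (𝓝 (u x - newtonPotential (fun t => -Δ u t) x)) := by
  refine ((tendsto_integral_greenKernel_atTop hn (continuous_laplacian hu).neg hi).const_sub
    (u x)).congr' ?_
  filter_upwards [eventually_gt_atTop 0] with r hr
  exact sub_eq_of_eq_add (eq_epanechnikovMean_add_integral_greenKernel hn hu hr x)

end NewtonPotential

theorem stmt_3_general {E : Type*} [NormedAddCommGroup E] [InnerProductSpace ℝ E]
    [FiniteDimensional ℝ E] [MeasurableSpace E] [BorelSpace E] (hn : 3 ≤ finrank ℝ E)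
    {f u : E → ℝ} (hf : ∀ᶠ x in cocompact E, 0 ≤ f x) (hu : ContDiff ℝ 2 u)
    (hPDE : ∀ x, -Δ u x = f x) (hbdd : IsBoundedUnder (· ≥ ·) (cocompact E) u) :
    ∃ a, liminf u (cocompact E) ≤ a ∧
      ∀ x, Integrable (fun t => newtonKernel (x - t) * f t) ∧ u x = newtonPotential f x + a := by
  have : Nontrivial E := nontrivial_of_finrank_pos (R := ℝ) (by lia)
  obtain rfl : (fun x => -Δ u x) = f := funext hPDE
  have hb : BddBelow (range u) := bddBelow_range_of_isBoundedUnder_cocompact hu.continuous hbdd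
  have hi := integrable_newtonKernel_sub_mul_neg_laplacian hn hu hb hf
  have hlim x := tendsto_epanechnikovMean_atTop_sub_newtonPotential hn hu (hi x)
  have hconst x z : u x - newtonPotential (fun t => -Δ u t) x ≤
      u z - newtonPotential (fun t => -Δ u t) z :=
    le_of_tendsto_epanechnikovMean_atTop hu.continuous hb (hlim x) (hlim z)
  exact ⟨_, liminf_le_of_tendsto_epanechnikovMean_atTop hu.continuous hbdd (hlim 0),
    fun x => ⟨hi x, by linarith [hconst x 0, hconst 0 x]⟩⟩

theorem stmt_3 {n : ℕ} (hn : 3 ≤ n) (α : ℝ) (hα0 : 0 < α) (hα1 : α < 1)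
    (f u : EuclideanSpace ℝ (Fin n) → ℝ)
    (hf_holder : ∀ x : EuclideanSpace ℝ (Fin n), ∃ (r : ℝ) (Cf : NNReal), 0 < r ∧
      HolderOnWith Cf (Real.toNNReal α) f (Metric.ball x r))
    (hf_nonneg : ∃ K : Set (EuclideanSpace ℝ (Fin n)), IsCompact K ∧ ∀ x ∉ K, 0 ≤ f x)
    (hu : ContDiff ℝ 2 u)
    (hPDE : ∀ x, - lap u x = f x)
    (hliminf : ∃ b : ℝ, ∀ᶠ x in Filter.cocompact (EuclideanSpace ℝ (Fin n)), b ≤ u x) :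
    ∃ a : ℝ, min 0 (Filter.liminf u (Filter.cocompact (EuclideanSpace ℝ (Fin n)))) ≤ a ∧
      ∀ x, u x =
        (1 / ((n : ℝ) * ((n : ℝ) - 2) *
          (volume (Metric.ball (0 : EuclideanSpace ℝ (Fin n)) 1)).toReal)) *
        (∫ t : EuclideanSpace ℝ (Fin n), f t / ‖x - t‖ ^ ((n : ℝ) - 2)) + a := by
  obtain ⟨K, hK, hfK⟩ := hf_nonneg
  obtain ⟨a, ha, hrep⟩ := stmt_3_general (by simpa using hn)
    (mem_of_superset hK.compl_mem_cocompact hfK) hu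
    (fun x => lap_eq_laplacian hu x ▸ hPDE x) hliminf
  exact ⟨a, min_le_of_right_le ha, fun x => by
    simpa only [newtonPotential_eq, newtonConst, finrank_euclideanSpace_fin, measureReal_def]
      using (hrep x).2⟩
end

section
/- Let $n \ge 3$, $1 \le k < \frac{n-2}{2}$ and let $K : \mathbb{R}^n \to \mathbb{R}$ be bounded above, nonnegative, and not identically zero. Write $(y,z) \in \mathbb{R}^k \times \mathbb{R}^{n-k}$. Let $u$ be a positive $C^2$ solution of $-\Delta u = K u^{\frac{n+2}{n-2}}$ in $\mathbb{R}^n$ equal to its Newtonian potential, i.e. $u(x) = \frac{1}{n(n-2)\omega_n}\int_{\mathbb{R}^n}\frac{K(\tilde x) u(\tilde x)^{\frac{n+2}{n-2}}}{|x-\tilde x|^{n-2}} d\tilde x$. If there exists $\tau > 0$ such that $\sup_{(y,z)} (1+|z|)^{\frac{n-2}{2}+\tau} u(y,z) < \infty$, then $\sup_{(y,z)} (1+|z|)^{n-2-k} u(y,z) < \infty$. -/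
open Real MeasureTheory

/-- The norm of the "z-part" of a point of `ℝ^n`, i.e. of its last `n - k` coordinates. -/
noncomputable def zNorm {n : ℕ} (k : ℕ) (x : EuclideanSpace ℝ (Fin n)) : ℝ :=
  Real.sqrt (∑ i ∈ Finset.univ.filter (fun i : Fin n => k ≤ (i : ℕ)), (x i) ^ 2)

/-!
Since `1 + |w|` or `|z - w|` is comparable with at least `1 + |z|`, the order-`α` Riesz potential of
a density decaying at rate `q > α` in `ℝ^d` decays at rate `min q d - α`, unless `q = d`. If the
density on `ℝ^n` is only controlled through its projection to a `d`-dimensional subspace, with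
`α < d`, integrating out the complementary directions turns the order-`α` kernel of `ℝ^n` into that
of `ℝ^d`, so the same rates hold.

Let `u` be the potential of `K u^p` with `K` bounded, and put `r = α / (p - 1)`, so that
`r p = r + α`. Decay at rate `r + τ` gives decay of the density at rate `α + r + p τ`, hence decay
of `u` at rate `min (d - α) (r + p τ)`, up to the exceptional exponent. The excess `τ` therefore
grows geometrically until the rate `d - α` is reached.
-/

open Asymptotics Module
open scoped ENNReal

lemma ennreal_rpow_neg_le_rpow_neg {x y : ℝ≥0∞} {a : ℝ} (ha : 0 ≤ a) (hxy : x ≤ y) :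
    y ^ (-a) ≤ x ^ (-a) := by
  rw [ENNReal.rpow_neg, ENNReal.rpow_neg]
  gcongr

lemma ennreal_rpow_neg_le_mul_rpow_neg {x y c : ℝ≥0∞} {a : ℝ} (ha : 0 ≤ a) (hc₀ : c ≠ 0)
    (hc : c ≠ ⊤) (hyx : y ≤ c * x) : x ^ (-a) ≤ c ^ a * y ^ (-a) := by
  have hca₀ : c ^ a ≠ 0 := by simp [ENNReal.rpow_eq_zero_iff, hc₀, hc]
  have hca : c ^ a ≠ ⊤ := ENNReal.rpow_ne_top_of_nonneg ha hc
  calc x ^ (-a) = c ^ a * (c * x) ^ (-a) := by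
        rw [ENNReal.rpow_neg, ENNReal.rpow_neg, ENNReal.mul_rpow_of_nonneg _ _ ha,
          ENNReal.mul_inv (.inl hca₀) (.inl hca), ← mul_assoc, ENNReal.mul_inv_cancel hca₀ hca,
          one_mul]
    _ ≤ c ^ a * y ^ (-a) := mul_le_mul_right (ennreal_rpow_neg_le_rpow_neg ha hyx) _

-- Up to constants, `1 + ‖w‖` or `‖z - w‖` is at least `1 + ‖z‖`, whichever of the two is larger.
lemma one_add_enorm_rpow_neg_mul_enorm_sub_rpow_neg_le {V : Type*} [NormedAddCommGroup V]
    {q β : ℝ} (hq : 0 ≤ q) (hβ : 0 ≤ β) (z w : V) :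
    (1 + ‖w‖ₑ) ^ (-q) * ‖z - w‖ₑ ^ (-β) ≤
      3 ^ q * (‖z - w‖ₑ ^ (-β) * (1 + ‖z‖ₑ + ‖z - w‖ₑ) ^ (-q)) +
        3 ^ β * ((1 + ‖w‖ₑ) ^ (-q) * (1 + ‖z‖ₑ + ‖w‖ₑ) ^ (-β)) := by
  have hz : ‖z‖ₑ ≤ ‖w‖ₑ + ‖z - w‖ₑ := by simpa using enorm_add_le w (z - w)
  rcases le_total ‖z - w‖ₑ (1 + ‖w‖ₑ) with hnear | hfar
  · refine le_add_right ?_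
    rw [mul_comm, mul_left_comm]
    gcongr
    refine ennreal_rpow_neg_le_mul_rpow_neg hq (by simp) (by simp) ?_
    calc 1 + ‖z‖ₑ + ‖z - w‖ₑ ≤ 1 + (‖w‖ₑ + ‖z - w‖ₑ) + ‖z - w‖ₑ := by gcongr
      _ = 1 + ‖w‖ₑ + ‖z - w‖ₑ + ‖z - w‖ₑ := by ring
      _ ≤ 1 + ‖w‖ₑ + (1 + ‖w‖ₑ) + (1 + ‖w‖ₑ) := by gcongr
      _ = 3 * (1 + ‖w‖ₑ) := by ring
  · refine le_add_left ?_
    rw [mul_left_comm]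
    gcongr
    refine ennreal_rpow_neg_le_mul_rpow_neg hβ (by simp) (by simp) ?_
    calc 1 + ‖z‖ₑ + ‖w‖ₑ ≤ 1 + (‖w‖ₑ + ‖z - w‖ₑ) + (1 + ‖w‖ₑ) := by
          gcongr
          exact le_add_self
      _ = (1 + ‖w‖ₑ) + (1 + ‖w‖ₑ) + ‖z - w‖ₑ := by ring
      _ ≤ ‖z - w‖ₑ + ‖z - w‖ₑ + ‖z - w‖ₑ := by gcongr
      _ = 3 * ‖z - w‖ₑ := by ring

lemma ofReal_one_add_norm_rpow {V : Type*} [SeminormedAddGroup V] (v : V) (s : ℝ) :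
    ENNReal.ofReal ((1 + ‖v‖) ^ s) = (1 + ‖v‖ₑ) ^ s := by
  rw [← ENNReal.ofReal_rpow_of_pos (by positivity), ENNReal.ofReal_add zero_le_one (norm_nonneg _),
    ENNReal.ofReal_one, ofReal_norm]

lemma enorm_div_norm_rpow_le {V : Type*} [SeminormedAddGroup V] {a : ℝ} (ha : 0 < a) (r : ℝ)
    (v : V) : ‖r / ‖v‖ ^ a‖ₑ ≤ ‖r‖ₑ * ‖v‖ₑ ^ (-a) := by
  rcases (norm_nonneg v).eq_or_lt with hv | hv
  · simp [← hv, Real.zero_rpow ha.ne']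
  · rw [div_eq_mul_inv, ← Real.rpow_neg hv.le, enorm_mul, ← ofReal_norm v,
      ENNReal.ofReal_rpow_of_pos hv,
      Real.enorm_of_nonneg (Real.rpow_nonneg hv.le _)]

section Haar

variable {E : Type*} [NormedAddCommGroup E] [NormedSpace ℝ E] [FiniteDimensional ℝ E]
  [MeasurableSpace E] [BorelSpace E] (μ : Measure E) [μ.IsAddHaarMeasure]

lemma lintegral_eq_mul_lintegral_comp_smul (f : E → ℝ≥0∞) {r : ℝ} (hr : 0 < r) :
    ∫⁻ x, f x ∂μ = ENNReal.ofReal r ^ finrank ℝ E * ∫⁻ x, f (r • x) ∂μ := by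
  have hr' : ENNReal.ofReal r ^ finrank ℝ E ≠ 0 := by positivity
  rw [← (measurableEmbedding_const_smul₀ hr.ne').lintegral_map, Measure.map_addHaar_smul μ hr.ne',
    lintegral_smul_measure, smul_eq_mul, abs_of_pos (by positivity),
    ENNReal.ofReal_inv_of_pos (by positivity), ENNReal.ofReal_pow hr.le,
    ENNReal.mul_inv_cancel_left hr' (by finiteness)]

lemma lintegral_enorm_rpow_neg_mul_add_rpow_neg {R : ℝ≥0∞} (hR₀ : R ≠ 0) (hR : R ≠ ⊤) (b c : ℝ) :
    ∫⁻ x : E, ‖x‖ₑ ^ (-b) * (R + ‖x‖ₑ) ^ (-c) ∂μ =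
      R ^ (finrank ℝ E - b - c) * ∫⁻ x : E, ‖x‖ₑ ^ (-b) * (1 + ‖x‖ₑ) ^ (-c) ∂μ := by
  have hr : 0 < R.toReal := ENNReal.toReal_pos hR₀ hR
  have hscale (x : E) : ‖R.toReal • x‖ₑ ^ (-b) * (R + ‖R.toReal • x‖ₑ) ^ (-c) =
      R ^ (-b - c) * (‖x‖ₑ ^ (-b) * (1 + ‖x‖ₑ) ^ (-c)) := by
    rw [enorm_smul, Real.enorm_eq_ofReal hr.le, ENNReal.ofReal_toReal hR, ← mul_one_add,
      ENNReal.mul_rpow_of_ne_top hR enorm_ne_top, ENNReal.mul_rpow_of_ne_top hR (by finiteness),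
      sub_eq_add_neg, ENNReal.rpow_add _ _ hR₀ hR]
    ring
  rw [lintegral_eq_mul_lintegral_comp_smul μ _ hr, ENNReal.ofReal_toReal hR]
  simp_rw [hscale]
  rw [lintegral_const_mul _ (by fun_prop), ← mul_assoc, ← ENNReal.rpow_natCast,
    ← ENNReal.rpow_add _ _ hR₀ hR]
  ring_nf

lemma lintegral_add_enorm_sub_rpow_neg {R : ℝ≥0∞} (hR₀ : R ≠ 0) (hR : R ≠ ⊤) (a : ℝ) (y : E) :
    ∫⁻ t, (R + ‖y - t‖ₑ) ^ (-a) ∂μ =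
      (∫⁻ t : E, (1 + ‖t‖ₑ) ^ (-a) ∂μ) * R ^ (-(a - finrank ℝ E)) := by
  rw [lintegral_sub_left_eq_self (fun t ↦ (R + ‖t‖ₑ) ^ (-a)) y, mul_comm, neg_sub]
  simpa using lintegral_enorm_rpow_neg_mul_add_rpow_neg μ hR₀ hR 0 a

lemma lintegral_one_add_enorm_rpow_neg_ne_top {a : ℝ} (ha : finrank ℝ E < a) :
    ∫⁻ x : E, (1 + ‖x‖ₑ) ^ (-a) ∂μ ≠ ⊤ := by
  simpa only [ofReal_one_add_norm_rpow] using (finite_integral_one_add_norm (μ := μ) ha).ne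

lemma setLIntegral_ball_enorm_rpow_neg_ne_top [Nontrivial E] {b : ℝ} (hb : b < finrank ℝ E)
    (r : ℝ) : ∫⁻ x in Metric.ball (0 : E) r, ‖x‖ₑ ^ (-b) ∂μ ≠ ⊤ := by
  have hint : IntegrableOn (fun x : E ↦ ‖x‖ ^ (-b)) (Metric.ball 0 r) μ :=
    integrableOn_ball_of_norm_le_rpow (C := 1) finrank_pos hb
      (.of_forall fun x ↦ by rw [one_mul, Real.norm_of_nonneg (by positivity)])
      (Measurable.aestronglyMeasurable (by fun_prop))
  refine ne_top_of_le_ne_top hint.2.ne (lintegral_mono_ae (ae_restrict_of_ae ?_))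
  filter_upwards [μ.ae_ne 0] with x hx
  have hx : 0 < ‖x‖ := norm_pos_iff.2 hx
  rw [Real.enorm_eq_ofReal (by positivity), ← ENNReal.ofReal_rpow_of_pos hx, ofReal_norm]

lemma lintegral_enorm_rpow_neg_mul_one_add_rpow_neg_ne_top {b c : ℝ} (hb : 0 ≤ b)
    (hbE : b < finrank ℝ E) (hbc : finrank ℝ E < b + c) :
    ∫⁻ x : E, ‖x‖ₑ ^ (-b) * (1 + ‖x‖ₑ) ^ (-c) ∂μ ≠ ⊤ := by
  have : Nontrivial E := nontrivial_of_finrank_pos (R := ℝ) (mod_cast hb.trans_lt hbE)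
  have hinside (x : E) : ‖x‖ₑ ^ (-b) * (1 + ‖x‖ₑ) ^ (-c) ≤ ‖x‖ₑ ^ (-b) := by
    refine mul_le_of_le_one_right' ?_
    simpa using ennreal_rpow_neg_le_rpow_neg (y := 1 + ‖x‖ₑ) (by linarith : 0 ≤ c) le_self_add
  have houtside (x : E) (hx : x ∈ (Metric.ball (0 : E) 1)ᶜ) :
      ‖x‖ₑ ^ (-b) * (1 + ‖x‖ₑ) ^ (-c) ≤ 2 ^ b * (1 + ‖x‖ₑ) ^ (-(b + c)) := by
    have hx : 1 ≤ ‖x‖ₑ := by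
      rw [← ofReal_norm, ENNReal.one_le_ofReal]
      simpa using hx
    rw [neg_add, ENNReal.rpow_add _ _ (by simp) (by finiteness), ← mul_assoc]
    gcongr
    refine ennreal_rpow_neg_le_mul_rpow_neg hb (by simp) (by simp) ?_
    rw [two_mul]
    gcongr
  rw [← lintegral_add_compl _ (measurableSet_ball (x := (0 : E)) (ε := 1)), ENNReal.add_ne_top]
  refine ⟨ne_top_of_le_ne_top (setLIntegral_ball_enorm_rpow_neg_ne_top μ hbE 1)
    (lintegral_mono hinside), ne_top_of_le_ne_top ?_
    ((setLIntegral_mono' measurableSet_ball.compl houtside).trans (setLIntegral_le_lintegral _ _))⟩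
  rw [lintegral_const_mul _ (by fun_prop)]
  have := lintegral_one_add_enorm_rpow_neg_ne_top μ hbc
  finiteness

lemma exists_lintegral_one_add_rpow_neg_mul_add_rpow_neg_le {α q : ℝ} (hα : α < finrank ℝ E)
    (hαq : α < q) (hq₀ : 0 ≤ q) (hq : q ≠ finrank ℝ E) :
    ∃ C : ℝ≥0∞, C ≠ ⊤ ∧ ∀ R : ℝ≥0∞, R ≠ 0 → R ≠ ⊤ →
      ∫⁻ w : E, (1 + ‖w‖ₑ) ^ (-q) * (R + ‖w‖ₑ) ^ (-(finrank ℝ E - α)) ∂μ ≤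
        C * R ^ (-(min q (finrank ℝ E) - α)) := by
  rcases hq.lt_or_gt with hq | hq
  · refine ⟨_, lintegral_enorm_rpow_neg_mul_one_add_rpow_neg_ne_top μ (b := q)
      (c := finrank ℝ E - α) hq₀ hq (by linarith), fun R hR₀ hR ↦ ?_⟩
    rw [min_eq_left hq.le, mul_comm,
      show -(q - α) = finrank ℝ E - q - (finrank ℝ E - α) by ring,
      ← lintegral_enorm_rpow_neg_mul_add_rpow_neg μ hR₀ hR]
    exact lintegral_mono fun w ↦
      mul_le_mul_left (ennreal_rpow_neg_le_rpow_neg hq₀ le_add_self) _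
  · refine ⟨_, lintegral_one_add_enorm_rpow_neg_ne_top μ hq, fun R _ _ ↦ ?_⟩
    rw [min_eq_right hq.le, ← lintegral_mul_const _ (by fun_prop)]
    exact lintegral_mono fun w ↦
      mul_le_mul_right (ennreal_rpow_neg_le_rpow_neg (by linarith) le_self_add) _

-- At `q = finrank ℝ E` the bound fails by a logarithm.
theorem exists_lintegral_one_add_rpow_neg_mul_enorm_sub_rpow_neg_le {α q : ℝ} (hα₀ : 0 < α)
    (hα : α < finrank ℝ E) (hαq : α < q) (hq : q ≠ finrank ℝ E) :
    ∃ C : ℝ≥0∞, C ≠ ⊤ ∧ ∀ z : E,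
      ∫⁻ w, (1 + ‖w‖ₑ) ^ (-q) * ‖z - w‖ₑ ^ (-(finrank ℝ E - α)) ∂μ ≤
        C * (1 + ‖z‖ₑ) ^ (-(min q (finrank ℝ E) - α)) := by
  set d : ℝ := (finrank ℝ E : ℝ)
  set I := ∫⁻ x : E, ‖x‖ₑ ^ (-(d - α)) * (1 + ‖x‖ₑ) ^ (-q) ∂μ
  have hI : I ≠ ⊤ := lintegral_enorm_rpow_neg_mul_one_add_rpow_neg_ne_top μ (by linarith)
    (by linarith) (by linarith)
  obtain ⟨C, hC, hfar⟩ := exists_lintegral_one_add_rpow_neg_mul_add_rpow_neg_le μ hα hαq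
    (hα₀.trans hαq).le hq
  refine ⟨3 ^ q * I + 3 ^ (d - α) * C, by finiteness, fun z ↦ ?_⟩
  have hnear : ∫⁻ w, ‖z - w‖ₑ ^ (-(d - α)) * (1 + ‖z‖ₑ + ‖z - w‖ₑ) ^ (-q) ∂μ ≤
      I * (1 + ‖z‖ₑ) ^ (-(min q d - α)) := by
    rw [lintegral_sub_left_eq_self (fun v ↦ ‖v‖ₑ ^ (-(d - α)) * (1 + ‖z‖ₑ + ‖v‖ₑ) ^ (-q)) z,
      lintegral_enorm_rpow_neg_mul_add_rpow_neg μ (by simp) (by finiteness), mul_comm]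
    gcongr
    · exact le_self_add
    · linarith [min_le_left q d]
  calc _ ≤ _ := lintegral_mono fun w ↦ one_add_enorm_rpow_neg_mul_enorm_sub_rpow_neg_le
        (hα₀.trans hαq).le (by linarith) z w
    _ = 3 ^ q * ∫⁻ w, ‖z - w‖ₑ ^ (-(d - α)) * (1 + ‖z‖ₑ + ‖z - w‖ₑ) ^ (-q) ∂μ + 3 ^ (d - α) *
        ∫⁻ w, (1 + ‖w‖ₑ) ^ (-q) * (1 + ‖z‖ₑ + ‖w‖ₑ) ^ (-(d - α)) ∂μ := by
      rw [lintegral_add_left (by fun_prop), lintegral_const_mul _ (by fun_prop),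
        lintegral_const_mul _ (by fun_prop)]
    _ ≤ 3 ^ q * (I * (1 + ‖z‖ₑ) ^ (-(min q d - α))) +
        3 ^ (d - α) * (C * (1 + ‖z‖ₑ) ^ (-(min q d - α))) := by
      gcongr
      exact hfar _ (by simp) (by finiteness)
    _ = _ := by ring

lemma lintegral_prod_mul_add_rpow_neg {F : Type*} [NormedAddCommGroup F] [NormedSpace ℝ F]
    [FiniteDimensional ℝ F] [Nontrivial F] [MeasurableSpace F] [BorelSpace F] (ν : Measure F)
    [ν.IsAddHaarMeasure] {g : F → ℝ≥0∞} (hg : Measurable g) (a : ℝ) (z : F) (y : E) :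
    ∫⁻ p : F × E, g p.1 * (‖z - p.1‖ₑ + ‖y - p.2‖ₑ) ^ (-a) ∂(ν.prod μ) =
      (∫⁻ t : E, (1 + ‖t‖ₑ) ^ (-a) ∂μ) * ∫⁻ w, g w * ‖z - w‖ₑ ^ (-(a - finrank ℝ E)) ∂ν := by
  rw [lintegral_prod _ (by fun_prop), ← lintegral_const_mul _ (by fun_prop)]
  refine lintegral_congr_ae ?_
  filter_upwards [ν.ae_ne z] with w hw
  have hzw : ‖z - w‖ₑ ≠ 0 := enorm_ne_zero.2 (sub_ne_zero.2 hw.symm)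
  rw [lintegral_const_mul _ (by fun_prop), lintegral_add_enorm_sub_rpow_neg μ hzw enorm_ne_top,
    mul_left_comm]

end Haar

section Projection

variable {V : Type*} [NormedAddCommGroup V] [InnerProductSpace ℝ V] (S : Submodule ℝ V)

lemma enorm_rpow_neg_le_mul_enorm_projections_rpow_neg [S.HasOrthogonalProjection] {a : ℝ}
    (ha : 0 ≤ a) (x : V) :
    ‖x‖ₑ ^ (-a) ≤
      2 ^ a * (‖S.orthogonalProjectionOnto x‖ₑ + ‖Sᗮ.orthogonalProjectionOnto x‖ₑ) ^ (-a) := by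
  refine ennreal_rpow_neg_le_mul_rpow_neg ha (by simp) (by simp) ?_
  rw [two_mul]
  gcongr <;> exact enorm_le_iff_norm_le.2 (Submodule.norm_orthogonalProjectionOnto_apply_le _ x)

variable [FiniteDimensional ℝ V] [MeasurableSpace V] [BorelSpace V]

lemma measurePreserving_orthogonalProjectionOnto_prod :
    MeasurePreserving
      (fun x : V ↦ (S.orthogonalProjectionOnto x, Sᗮ.orthogonalProjectionOnto x)) := by
  simpa only [Function.comp_def, Submodule.orthogonalDecomposition_apply] using
    (WithLp.volume_preserving_ofLp S Sᗮ).comp S.orthogonalDecomposition.measurePreserving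

-- In `∫ f(Px) |x - t|^(α - dim V) dt` the fibre `Sᗮ` integrates out to `|Px - w|^(α - dim S)`.
lemma exists_lintegral_one_add_projection_rpow_neg_mul_enorm_sub_rpow_neg_le {α q : ℝ}
    (hα₀ : 0 < α) (hα : α < finrank ℝ S) (hαq : α < q) (hq : q ≠ finrank ℝ S) :
    ∃ C : ℝ≥0∞, C ≠ ⊤ ∧ ∀ x : V,
      ∫⁻ t, (1 + ‖S.orthogonalProjectionOnto t‖ₑ) ^ (-q) * ‖x - t‖ₑ ^ (-(finrank ℝ V - α)) ≤
        C * (1 + ‖S.orthogonalProjectionOnto x‖ₑ) ^ (-(min q (finrank ℝ S) - α)) := by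
  have : Nontrivial S := nontrivial_of_finrank_pos (R := ℝ) (mod_cast hα₀.trans hα)
  have hdim : (finrank ℝ S : ℝ) + finrank ℝ Sᗮ = finrank ℝ V :=
    mod_cast S.finrank_add_finrank_orthogonal
  set a : ℝ := finrank ℝ V - α
  set A := ∫⁻ y : Sᗮ, (1 + ‖y‖ₑ) ^ (-a)
  have hA : A ≠ ⊤ := lintegral_one_add_enorm_rpow_neg_ne_top _ (by linarith)
  obtain ⟨C, hC, hriesz⟩ := exists_lintegral_one_add_rpow_neg_mul_enorm_sub_rpow_neg_le
    (volume : Measure S) hα₀ hα hαq hq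
  refine ⟨2 ^ a * (A * C), by finiteness, fun x ↦ ?_⟩
  have hfibre := (measurePreserving_orthogonalProjectionOnto_prod S).lintegral_comp
    (f := fun p ↦ (1 + ‖p.1‖ₑ) ^ (-q) * (‖S.orthogonalProjectionOnto x - p.1‖ₑ +
      ‖Sᗮ.orthogonalProjectionOnto x - p.2‖ₑ) ^ (-a)) (by fun_prop)
  calc ∫⁻ t, (1 + ‖S.orthogonalProjectionOnto t‖ₑ) ^ (-q) * ‖x - t‖ₑ ^ (-a)
      ≤ ∫⁻ t, 2 ^ a * ((1 + ‖S.orthogonalProjectionOnto t‖ₑ) ^ (-q) *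
          (‖S.orthogonalProjectionOnto x - S.orthogonalProjectionOnto t‖ₑ +
            ‖Sᗮ.orthogonalProjectionOnto x - Sᗮ.orthogonalProjectionOnto t‖ₑ) ^ (-a)) := by
        refine lintegral_mono fun t ↦ ?_
        rw [mul_left_comm, ← map_sub, ← map_sub]
        gcongr
        exact enorm_rpow_neg_le_mul_enorm_projections_rpow_neg S (by linarith) _
    _ = 2 ^ a * (A * ∫⁻ w, (1 + ‖w‖ₑ) ^ (-q) *
          ‖S.orthogonalProjectionOnto x - w‖ₑ ^ (-(finrank ℝ S - α))) := by
        rw [lintegral_const_mul' _ _ (by finiteness), hfibre, Measure.volume_eq_prod,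
          lintegral_prod_mul_add_rpow_neg _ _ (g := fun w ↦ (1 + ‖w‖ₑ) ^ (-q)) (by fun_prop),
          eq_sub_of_add_eq hdim, sub_right_comm]
    _ ≤ 2 ^ a * (A * C) * (1 + ‖S.orthogonalProjectionOnto x‖ₑ) ^
          (-(min q (finrank ℝ S) - α)) := by
        rw [mul_assoc, mul_assoc]
        gcongr
        exact hriesz _

/-- The Riesz potential `∫ f(t) |x - t|^(α - dim V) dt` of order `α`, without the usual normalising
constant; for `α = 2` it is a multiple of the Newtonian potential. -/
noncomputable def rieszPotential (α : ℝ) (f : V → ℝ) (x : V) : ℝ :=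
  ∫ t, f t / ‖x - t‖ ^ (finrank ℝ V - α)

lemma enorm_rieszPotential_le {α : ℝ} (hα : α < finrank ℝ V) (f : V → ℝ) (x : V) :
    ‖rieszPotential α f x‖ₑ ≤ ∫⁻ t, ‖f t‖ₑ * ‖x - t‖ₑ ^ (-(finrank ℝ V - α)) :=
  (enorm_integral_le_lintegral_enorm _).trans <|
    lintegral_mono fun t ↦ enorm_div_norm_rpow_le (sub_pos.2 hα) (f t) (x - t)

end Projection

/-- `u` decays at least like `(1 + |Px|)^(-s)`, where `P` is the orthogonal projection onto `S`. The
bound is global: it holds on all of `V` with one constant, uniformly in the `Sᗮ`-directions. -/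
def DecaysAlong {V : Type*} [NormedAddCommGroup V] [InnerProductSpace ℝ V] (S : Submodule ℝ V)
    [S.HasOrthogonalProjection] (s : ℝ) (u : V → ℝ) : Prop :=
  u =O[⊤] fun x ↦ (1 + ‖S.orthogonalProjectionOnto x‖) ^ (-s)

namespace DecaysAlong

section

variable {V : Type*} [NormedAddCommGroup V] [InnerProductSpace ℝ V] {S : Submodule ℝ V}
  [S.HasOrthogonalProjection] {K u : V → ℝ} {s s' p : ℝ}

lemma iff_exists_rpow_mul_le (hu : ∀ x, 0 ≤ u x) :
    DecaysAlong S s u ↔ ∃ M, ∀ x, (1 + ‖S.orthogonalProjectionOnto x‖) ^ s * u x ≤ M := by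
  refine isBigO_top.trans (exists_congr fun M ↦ forall_congr' fun x ↦ ?_)
  have hP : 0 < (1 + ‖S.orthogonalProjectionOnto x‖) ^ s := by positivity
  rw [Real.rpow_neg (by positivity), Real.norm_of_nonneg (hu x),
    Real.norm_of_nonneg (by positivity), ← div_eq_mul_inv, le_div_iff₀' hP]

lemma iff_exists_enorm_le :
    DecaysAlong S s u ↔ ∃ C : ℝ≥0∞, C ≠ ⊤ ∧
      ∀ x, ‖u x‖ₑ ≤ C * (1 + ‖S.orthogonalProjectionOnto x‖ₑ) ^ (-s) := by
  have hP (x : V) : 0 ≤ (1 + ‖S.orthogonalProjectionOnto x‖) ^ (-s) := by positivity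
  simp_rw [DecaysAlong, isBigO_top, ← ofReal_one_add_norm_rpow, ← ofReal_norm (u _),
    Real.norm_of_nonneg (hP _)]
  constructor
  · rintro ⟨C, hC⟩
    exact ⟨ENNReal.ofReal C, by finiteness, fun x ↦ by
      rw [← ENNReal.ofReal_mul' (hP x)]
      exact ENNReal.ofReal_le_ofReal (hC x)⟩
  · rintro ⟨C, hC, h⟩
    refine ⟨C.toReal, fun x ↦ ?_⟩
    rw [← ENNReal.ofReal_le_ofReal_iff (mul_nonneg ENNReal.toReal_nonneg (hP x)),
      ENNReal.ofReal_mul' (hP x), ENNReal.ofReal_toReal hC]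
    exact h x

lemma mono (h : DecaysAlong S s u) (hs : s' ≤ s) : DecaysAlong S s' u := by
  refine h.trans (.of_norm_le fun x ↦ ?_)
  rw [Real.norm_of_nonneg (by positivity)]
  gcongr
  simp

lemma mul_rpow (h : DecaysAlong S s u) (hK : K =O[⊤] fun _ ↦ (1 : ℝ)) (hp : 0 ≤ p) :
    DecaysAlong S (s * p) (fun x ↦ K x * u x ^ p) := by
  have hup := hK.mul (h.rpow hp (.of_forall fun x ↦ by positivity))
  refine hup.congr_right fun x ↦ ?_
  rw [one_mul, ← Real.rpow_mul (by positivity), neg_mul]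

end

variable {V : Type*} [NormedAddCommGroup V] [InnerProductSpace ℝ V] [FiniteDimensional ℝ V]
  [MeasurableSpace V] [BorelSpace V] {S : Submodule ℝ V} {K u f : V → ℝ} {c p q s α : ℝ}

protected lemma rieszPotential (hf : DecaysAlong S q f) (hα₀ : 0 < α) (hα : α < finrank ℝ S)
    (hαq : α < q) (hq : q ≠ finrank ℝ S) :
    DecaysAlong S (min q (finrank ℝ S) - α) (rieszPotential α f) := by
  obtain ⟨B, hB, hf⟩ := iff_exists_enorm_le.1 hf
  obtain ⟨C, hC, hkernel⟩ :=
    exists_lintegral_one_add_projection_rpow_neg_mul_enorm_sub_rpow_neg_le S hα₀ hα hαq hq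
  refine iff_exists_enorm_le.2 ⟨B * C, by finiteness, fun x ↦ ?_⟩
  calc ‖rieszPotential α f x‖ₑ
      ≤ ∫⁻ t, ‖f t‖ₑ * ‖x - t‖ₑ ^ (-(finrank ℝ V - α)) :=
        enorm_rieszPotential_le (hα.trans_le (mod_cast S.finrank_le)) f x
    _ ≤ ∫⁻ t, B * ((1 + ‖S.orthogonalProjectionOnto t‖ₑ) ^ (-q) *
          ‖x - t‖ₑ ^ (-(finrank ℝ V - α))) := by
        refine lintegral_mono fun t ↦ ?_
        rw [← mul_assoc]
        gcongr
        exact hf t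
    _ ≤ B * C * (1 + ‖S.orthogonalProjectionOnto x‖ₑ) ^ (-(min q (finrank ℝ S) - α)) := by
        rw [lintegral_const_mul' _ _ hB, mul_assoc]
        gcongr
        exact hkernel x

lemma of_eq_rieszPotential_rpow (h : DecaysAlong S s u)
    (hu : ∀ x, u x = c * rieszPotential α (fun t ↦ K t * u t ^ p) x)
    (hK : K =O[⊤] fun _ ↦ (1 : ℝ)) (hp : 0 ≤ p) (hα₀ : 0 < α) (hα : α < finrank ℝ S)
    (hαq : α < q) (hq : q ≠ finrank ℝ S) (hqs : q ≤ s * p) :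
    DecaysAlong S (min q (finrank ℝ S) - α) u :=
  ((((h.mul_rpow hK hp).mono hqs).rieszPotential hα₀ hα hαq hq).const_mul_left c).congr_left
    fun x ↦ (hu x).symm

-- With `r = α / (p - 1)` the density decays at rate `(r + τ) p = α + r + p τ`. Keeping only
-- `α + r + ρ τ` of it, with `ρ = (1 + p) / 2 < p`, avoids the resonant rate `dim S`.
lemma bootstrap_step {τ : ℝ} (hτ : 0 < τ) (h : DecaysAlong S (α / (p - 1) + τ) u)
    (hu : ∀ x, u x = c * rieszPotential α (fun t ↦ K t * u t ^ p) x)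
    (hK : K =O[⊤] fun _ ↦ (1 : ℝ)) (hp : 1 < p) (hα₀ : 0 < α) (hα : α < finrank ℝ S) :
    DecaysAlong S (finrank ℝ S - α) u ∨ DecaysAlong S (α / (p - 1) + (1 + p) / 2 * τ) u := by
  set r := α / (p - 1)
  have hrα : r * (p - 1) = α := div_mul_cancel₀ α (sub_pos.2 hp).ne'
  have hr₀ : 0 < r := div_pos hα₀ (sub_pos.2 hp)
  have himprove {q : ℝ} := h.of_eq_rieszPotential_rpow (q := q) hu hK (by linarith) hα₀ hα
  rcases lt_or_ge (finrank ℝ S : ℝ) ((r + τ) * p) with hd | hd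
  · left
    simpa only [min_eq_right hd.le] using himprove (hα.trans hd) hd.ne' le_rfl
  · right
    have hq : α + r + (1 + p) / 2 * τ < (r + τ) * p := by nlinarith
    have hmin := himprove (q := α + r + (1 + p) / 2 * τ) (by nlinarith) (hq.trans_le hd).ne hq.le
    rw [min_eq_left (hq.trans_le hd).le] at hmin
    convert hmin using 1
    ring

theorem optimal_of_eq_rieszPotential_rpow {τ : ℝ} (hτ : 0 < τ)
    (h : DecaysAlong S (α / (p - 1) + τ) u)
    (hu : ∀ x, u x = c * rieszPotential α (fun t ↦ K t * u t ^ p) x)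
    (hK : K =O[⊤] fun _ ↦ (1 : ℝ)) (hp : 1 < p) (hα₀ : 0 < α) (hα : α < finrank ℝ S) :
    DecaysAlong S (finrank ℝ S - α) u := by
  by_contra hopt
  have hiter (j : ℕ) : DecaysAlong S (α / (p - 1) + ((1 + p) / 2) ^ j * τ) u := by
    induction j with
    | zero => simpa using h
    | succ j ih =>
      rw [pow_succ', mul_assoc]
      exact (bootstrap_step (by positivity) ih hu hK hp hα₀ hα).resolve_left hopt
  obtain ⟨j, hj⟩ := pow_unbounded_of_one_lt (finrank ℝ S / τ) (by linarith : 1 < (1 + p) / 2)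
  rw [div_lt_iff₀ hτ] at hj
  have hr : 0 < α / (p - 1) := div_pos hα₀ (sub_pos.2 hp)
  have hd : finrank ℝ S < (α / (p - 1) + ((1 + p) / 2) ^ j * τ) * p := by nlinarith
  refine hopt ?_
  simpa only [min_eq_right hd.le] using
    (hiter j).of_eq_rieszPotential_rpow hu hK (by linarith) hα₀ hα (hα.trans hd) hd.ne' le_rfl

end DecaysAlong

section Coordinates

lemma sq_norm_orthogonalProjectionOnto_span_range {V ι : Type*} [NormedAddCommGroup V]
    [InnerProductSpace ℝ V] [Fintype ι] {v : ι → V} (hv : Orthonormal ℝ v)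
    [(Submodule.span ℝ (Set.range v)).HasOrthogonalProjection] (x : V) :
    ‖(Submodule.span ℝ (Set.range v)).orthogonalProjectionOnto x‖ ^ 2 =
      ∑ i, inner ℝ (v i) x ^ 2 := by
  have hbasis : Orthonormal ℝ (Basis.span hv.linearIndependent) := by
    simpa only [funext (Basis.span_apply hv.linearIndependent)] using orthonormal_span hv
  rw [← ((Basis.span hv.linearIndependent).toOrthonormalBasis hbasis).sum_sq_norm_inner_right]
  simp only [Basis.coe_toOrthonormalBasis, Submodule.inner_orthogonalProjectionOnto_eq_of_mem_left,
    Basis.coe_span_apply, Real.norm_eq_abs, sq_abs]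

lemma orthonormal_basisFun_subtype {ι : Type*} [Fintype ι] (p : ι → Prop) :
    Orthonormal ℝ fun i : {i // p i} ↦ EuclideanSpace.basisFun ι ℝ i :=
  (EuclideanSpace.basisFun ι ℝ).orthonormal.comp _ Subtype.val_injective

/-- The subspace of `ℝ^n` spanned by the last `n - k` coordinate directions, in which the variable
`z` of a point `(y, z)` lives. -/
noncomputable def zSubspace (n k : ℕ) : Submodule ℝ (EuclideanSpace ℝ (Fin n)) :=
  Submodule.span ℝ
    (Set.range fun i : {i : Fin n // k ≤ i} ↦ EuclideanSpace.basisFun (Fin n) ℝ i)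

variable {n k : ℕ}

lemma norm_orthogonalProjectionOnto_zSubspace (x : EuclideanSpace ℝ (Fin n)) :
    ‖(zSubspace n k).orthogonalProjectionOnto x‖ = zNorm k x := by
  have hsum : ‖(zSubspace n k).orthogonalProjectionOnto x‖ ^ 2 =
      ∑ i : {i : Fin n // k ≤ i}, x i ^ 2 := by
    rw [zSubspace, sq_norm_orthogonalProjectionOnto_span_range (orthonormal_basisFun_subtype _)]
    simp only [EuclideanSpace.basisFun_inner]
  rw [zNorm, ← Finset.sum_subtype_eq_sum_filter, Finset.subtype_univ, ← hsum,
    Real.sqrt_sq (norm_nonneg _)]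

lemma finrank_zSubspace : finrank ℝ (zSubspace n k) = n - k := by
  rw [zSubspace, finrank_span_eq_card (orthonormal_basisFun_subtype _).linearIndependent]
  calc Fintype.card {i : Fin n // k ≤ i}
      = n - Fintype.card {i : Fin n // (i : ℕ) < k} := by
        simpa only [not_lt, Fintype.card_fin] using
          Fintype.card_subtype_compl fun i : Fin n ↦ (i : ℕ) < k
    _ = n - min n k := by rw [Fintype.card_subtype, Fin.card_filter_val_lt]
    _ = n - k := by omega

end Coordinates

theorem stmt_13_general {n k : ℕ} {α p B c : ℝ} (hα : 0 < α) (hkn : k + α < n) (hp : 1 < p)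
    {K u : EuclideanSpace ℝ (Fin n) → ℝ} (hK : ∀ x, |K x| ≤ B) (hu : ∀ x, 0 ≤ u x)
    (hrep : ∀ x, u x = c * ∫ t, K t * u t ^ p / ‖x - t‖ ^ ((n : ℝ) - α))
    (hdecay : ∃ τ : ℝ, 0 < τ ∧ ∃ M : ℝ, ∀ x, (1 + zNorm k x) ^ (α / (p - 1) + τ) * u x ≤ M) :
    ∃ M : ℝ, ∀ x, (1 + zNorm k x) ^ ((n : ℝ) - α - k) * u x ≤ M := by
  obtain ⟨τ, hτ, hdecay⟩ := hdecay
  have hdim : (finrank ℝ (zSubspace n k) : ℝ) = n - k := by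
    rw [finrank_zSubspace, Nat.cast_sub (mod_cast (by linarith : (k : ℝ) ≤ n))]
  have hKO : K =O[⊤] fun _ ↦ (1 : ℝ) := isBigO_top.2 ⟨B, by simpa using hK⟩
  simp only [← norm_orthogonalProjectionOnto_zSubspace] at hdecay ⊢
  rw [← DecaysAlong.iff_exists_rpow_mul_le hu] at hdecay ⊢
  rw [sub_right_comm, ← hdim]
  refine hdecay.optimal_of_eq_rieszPotential_rpow hτ (c := c) (K := K) (fun x ↦ ?_) hKO hp hα
    (by linarith)
  simpa only [rieszPotential, finrank_euclideanSpace_fin] using hrep x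

theorem stmt_13 {n k : ℕ} (hn : 3 ≤ n) (hk : 1 ≤ k) (hkn : 2 * k < n - 2)
    (K u : EuclideanSpace ℝ (Fin n) → ℝ)
    (hKbd : ∃ B : ℝ, ∀ x, K x ≤ B)
    (hKnn : ∀ x, 0 ≤ K x) (hKne : ∃ x, K x ≠ 0)
    (hupos : ∀ x, 0 < u x) (huC2 : ContDiff ℝ 2 u)
    (hPDE : ∀ x, - lap u x = K x * u x ^ (((n : ℝ) + 2) / ((n : ℝ) - 2)))
    (hrep : ∀ x, u x =
      (1 / ((n : ℝ) * ((n : ℝ) - 2) *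
        (volume (Metric.ball (0 : EuclideanSpace ℝ (Fin n)) 1)).toReal)) *
      ∫ t : EuclideanSpace ℝ (Fin n),
        K t * u t ^ (((n : ℝ) + 2) / ((n : ℝ) - 2)) / ‖x - t‖ ^ ((n : ℝ) - 2))
    (hdecay : ∃ τ : ℝ, 0 < τ ∧ ∃ M : ℝ,
      ∀ x, (1 + zNorm k x) ^ (((n : ℝ) - 2) / 2 + τ) * u x ≤ M) :
    ∃ M : ℝ, ∀ x, (1 + zNorm k x) ^ ((n : ℝ) - 2 - k) * u x ≤ M := by
  obtain ⟨B, hB⟩ := hKbd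
  have hkn' : (k : ℝ) + 2 < n := mod_cast (by omega : k + 2 < n)
  have hn' : (0 : ℝ) < n - 2 := by linarith [k.cast_nonneg (α := ℝ)]
  have hp : ((n : ℝ) + 2) / (n - 2) - 1 = 4 / (n - 2) := by field_simp; ring
  refine stmt_13_general two_pos hkn' (sub_pos.1 (hp ▸ by positivity))
    (fun x ↦ (abs_of_nonneg (hKnn x)).trans_le (hB x)) (fun x ↦ (hupos x).le) hrep ?_
  rwa [hp, show (2 : ℝ) / (4 / (n - 2)) = (n - 2) / 2 by field_simp; ring]
end
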